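/- Let α be a terminal-free pattern and let Δ_α be an arbitrary Janus operating mode for α. Then there exists a Janus automaton M with cn(Δ_α) + 1 counters such that L(M) = L(α). -/

import Mathlib

/-! Patterns: variables are natural numbers; a terminal-free pattern is a
nonempty list of variables, with 1-based positions. -/

/-- The variable at (1-based) position `j` of the pattern `α`. -/
def patAt (α : List ℕ) (j : ℕ) : ℕ := α.getD (j - 1) 0

/-- The set of (1-based) positions of the pattern `α` carrying the variable `x`. -/
def varpos (α : List ℕ) (x : ℕ) : Finset ℕ :=
  (Finset.Icc 1 α.length).filter (fun j => patAt α j = x)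

/-- A matching order for the variable `x` in the pattern `α`: a sequence of
`|α|_x − 1` pairs of positions of `x`, each with smaller first component,
whose edge set makes the set of positions of `x` a connected graph. -/
def IsMatchingOrder (α : List ℕ) (x : ℕ) (M : List (ℕ × ℕ)) : Prop :=
  M.length + 1 = α.count x ∧
  (∀ p ∈ M, p.1 ∈ varpos α x ∧ p.2 ∈ varpos α x ∧ p.1 < p.2) ∧
  ∀ a ∈ varpos α x, ∀ b ∈ varpos α x,
    Relation.ReflTransGen (fun u v => (u, v) ∈ M ∨ (v, u) ∈ M) a b

/-- A complete matching order for `α`: a tuple of `Σ_{x ∈ var(α)} (|α|_x − 1)`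
matching positions containing, for every variable `x` of `α`, all the elements
of some matching order for `x` in `α`. -/
def IsCompleteMatchingOrder (α : List ℕ) (C : List (ℕ × ℕ)) : Prop :=
  ∃ M : ℕ → List (ℕ × ℕ),
    (∀ x ∈ α.toFinset, IsMatchingOrder α x (M x)) ∧
    C.length = ∑ x ∈ α.toFinset, (α.count x - 1) ∧
    ∀ x ∈ α.toFinset, ∀ p ∈ M x, p ∈ C
/-! Janus operating modes. -/

/-- The two head markers: `lam` (λ) for the left head, `rho` (ρ) for the right head. -/
inductive Marker : Type
  | lam
  | rho
deriving DecidableEq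

/-- The map `g` from Definition 4: `g(j,j') = (j+1, …, j'−1)` and
`g(j',j) = (j', j'−1, …, j)` for `j < j'`. -/
def gfun (j j' : ℕ) : List ℕ :=
  if j < j' then (List.range (j' - j - 1)).map (fun i => j + 1 + i)
  else if j' < j then (List.range (j - j' + 1)).map (fun i => j - i)
  else []

/-- The position of the most recent entry with marker `m` among the first `j+1`
entries of `L`; if there is none, the first entry of `L` with marker `m`. -/
def latestEntry (L : List (ℕ × Marker)) (j : ℕ) (m : Marker) : Option ℕ :=
  match ((L.take (j + 1)).filter (fun e => decide (e.2 = m))).getLast? with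
  | some e => some e.1
  | none => ((L.filter (fun e => decide (e.2 = m))).head?).map Prod.fst

/-- At every prefix of `L`, the most recent λ-entry is ≤ the most recent ρ-entry
(comparing with the first λ-entry resp. ρ-entry when none has occurred yet). -/
def GoodInterleaving (L : List (ℕ × Marker)) : Prop :=
  ∀ j < L.length, ∀ pl pr,
    latestEntry L j Marker.lam = some pl → latestEntry L j Marker.rho = some pr → pl ≤ pr

/-- `Δ` is a Janus operating mode for `α`, derived from some complete matching
order `C` for `α` (with `(l_0, r_0) := (0, 0)`): each `D_i` is an interleaving
`D'_i` of `g(l_{i−1}, l_i)` with λ-markers and `g(r_{i−1}, r_i)` with ρ-markers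
(preserving the relative order of each, and such that at every prefix the most
recent λ-entry is ≤ the most recent ρ-entry), followed by `(r_i, ρ), (l_i, λ)`. -/
def IsJanusOperatingMode (α : List ℕ) (Δ : List (List (ℕ × Marker))) : Prop :=
  ∃ C : List (ℕ × ℕ),
    IsCompleteMatchingOrder α C ∧
    Δ.length = C.length ∧
    ∀ i < C.length,
      ∃ D' : List (ℕ × Marker),
        D'.filter (fun e => decide (e.2 = Marker.lam)) =
          (gfun (if i = 0 then 0 else (C.getD (i - 1) (0, 0)).1) (C.getD i (0, 0)).1).map
            (fun p => (p, Marker.lam)) ∧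
        D'.filter (fun e => decide (e.2 = Marker.rho)) =
          (gfun (if i = 0 then 0 else (C.getD (i - 1) (0, 0)).2) (C.getD i (0, 0)).2).map
            (fun p => (p, Marker.rho)) ∧
        GoodInterleaving D' ∧
        Δ.getD i [] =
          D' ++ [((C.getD i (0, 0)).2, Marker.rho), ((C.getD i (0, 0)).1, Marker.lam)]

open Classical in
/-- For a string `D` of variables (0-based indexing), `sVal D i` is the number of
variables `x ≠ D_i` having an occurrence both strictly before and strictly after
position `i` in `D`. -/
noncomputable def sVal (D : List ℕ) (i : ℕ) : ℕ :=
  (D.toFinset.filter (fun x =>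
    x ≠ D.getD i 0 ∧ (∃ j, j < i ∧ D.getD j 0 = x) ∧
    ∃ j', i < j' ∧ j' < D.length ∧ D.getD j' 0 = x)).card

/-- The head movement indicator of a Janus operating mode: the concatenation of
its tuples `D_1, …, D_k`. -/
def hmi (Δ : List (List (ℕ × Marker))) : List (ℕ × Marker) := Δ.flatten

/-- The string of variables `D_α = y_{d'_1} · y_{d'_2} · … · y_{d'_{k'}}`
associated with the head movement indicator of `Δ` and the pattern `α`. -/
def hmiVars (α : List ℕ) (Δ : List (List (ℕ × Marker))) : List ℕ :=
  (hmi Δ).map (fun e => patAt α e.1)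

/-- The counter number of a Janus operating mode `Δ` for `α`:
`cn(Δ) = max{s_i | 1 ≤ i ≤ k'}`. -/
noncomputable def cnOf (α : List ℕ) (Δ : List (List (ℕ × Marker))) : ℕ :=
  (Finset.range (hmiVars α Δ).length).sup (sVal (hmiVars α Δ))

/-- The variable distance of `α`: the smallest `k ≥ 0` such that for every
variable `x`, every factorisation `α = β·x·γ·x·δ` with `|γ|_x = 0` satisfies
`|var(γ)| ≤ k`. -/
noncomputable def vd (α : List ℕ) : ℕ :=
  sInf {k : ℕ | ∀ x : ℕ, ∀ β γ δ : List ℕ,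
    α = β ++ [x] ++ γ ++ [x] ++ δ → γ.count x = 0 → γ.toFinset.card ≤ k}
/-- The pattern language of a terminal-free pattern `α` over the terminal
alphabet `A`: all images of `α` under substitutions (morphisms `X* → A*`). -/
def PatternLang (A : Type) (α : List ℕ) : Set (List A) :=
  {w | ∃ σ : ℕ → List A, w = (α.map σ).flatten}

/-- A tape symbol of a Janus automaton: the left endmarker `¢`, the right
endmarker `$`, or an input symbol. -/
inductive JSym (A : Type) : Type
  | lend
  | rend
  | ch (a : A)

/-- A head instruction of a Janus automaton: `−1`, `0` or `1`. -/
inductive HInstr : Type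
  | left
  | stay
  | right

def HInstr.toInt : HInstr → ℤ
  | .left => -1
  | .stay => 0
  | .right => 1

/-- A counter instruction of a Janus automaton: `0` (keep), `1` (increment)
or `r` (reset). -/
inductive CInstr : Type
  | keep
  | inc
  | reset

/-- A Janus automaton with `k` counters over the input alphabet `A`:
a finite state set `Q`, an initial state `q0`, a set `F` of accepting states,
and a transition function
`δ : Q × Σ² × {t_=, t_<}^k → Q × {−1,0,1}² × {0,1,r}^k`
(the counter message `true` stands for `t_=`, i.e. counter value = bound). -/
structure JFA (k : ℕ) (A : Type) : Type 1 where
  Q : Type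
  fin : Fintype Q
  q0 : Q
  F : Set Q
  δ : Q → JSym A → JSym A → (Fin k → Bool) → Q × (HInstr × HInstr) × (Fin k → CInstr)

/-- A configuration of a Janus automaton with `k` counters and state set `Q`:
a state, the two head positions, and the counter values and counter bounds. -/
structure JConfig (k : ℕ) (Q : Type) where
  q : Q
  h1 : ℕ
  h2 : ℕ
  cval : Fin k → ℕ
  cbnd : Fin k → ℕ

/-- The symbol at position `h` of the tape `¢w$` (position `0` is `¢`,
positions `1, …, |w|` carry `w`, position `|w|+1` is `$`). -/
def tapeSym {A : Type} (w : List A) (h : ℕ) : JSym A :=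
  if h = 0 then JSym.lend
  else
    match w[h - 1]? with
    | some a => JSym.ch a
    | none => JSym.rend

/-- A valid configuration on input `¢w$`: `0 ≤ h_1 ≤ h_2 ≤ |w|+1` and
`0 ≤ c_i ≤ C_i ≤ |w|` for every counter `i`. -/
def JValid {k : ℕ} {Q : Type} {A : Type} (w : List A) (c : JConfig k Q) : Prop :=
  c.h1 ≤ c.h2 ∧ c.h2 ≤ w.length + 1 ∧ ∀ i, c.cval i ≤ c.cbnd i ∧ c.cbnd i ≤ w.length

/-- An atomic move of the Janus automaton `M` on input `¢w$`: the transition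
function is applied to the current state, the scanned symbols and the counter
messages; the heads move by the head instructions if
`0 ≤ h_1 + r_1 ≤ h_2 + r_2 ≤ |w|+1` and stay otherwise; a reset counter gets
value `0` and a nondeterministically guessed bound `≤ |w|`, and otherwise the
bound is unchanged and the value is incremented strictly modulo the bound. -/
def JStep {k : ℕ} {A : Type} (M : JFA k A) (w : List A) (c c' : JConfig k M.Q) : Prop :=
  let res := M.δ c.q (tapeSym w c.h1) (tapeSym w c.h2) (fun i => decide (c.cval i = c.cbnd i))
  let t1 : ℤ := (c.h1 : ℤ) + res.2.1.1.toInt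
  let t2 : ℤ := (c.h2 : ℤ) + res.2.1.2.toInt
  JValid w c ∧ JValid w c' ∧
  c'.q = res.1 ∧
  (if 0 ≤ t1 ∧ t1 ≤ t2 ∧ t2 ≤ (w.length : ℤ) + 1
    then (c'.h1 : ℤ) = t1 ∧ (c'.h2 : ℤ) = t2
    else c'.h1 = c.h1 ∧ c'.h2 = c.h2) ∧
  ∀ i : Fin k,
    match res.2.2 i with
    | CInstr.reset => c'.cval i = 0 ∧ c'.cbnd i ≤ w.length
    | CInstr.keep => c'.cbnd i = c.cbnd i ∧ c'.cval i = c.cval i % (c.cbnd i + 1)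
    | CInstr.inc => c'.cbnd i = c.cbnd i ∧ c'.cval i = (c.cval i + 1) % (c.cbnd i + 1)

/-- `M` accepts `w` iff a configuration with an accepting state is reachable
from the initial configuration by a sequence of atomic moves. -/
def JFA.Accepts {k : ℕ} {A : Type} (M : JFA k A) (w : List A) : Prop :=
  ∃ c : JConfig k M.Q,
    Relation.ReflTransGen (JStep M w) ⟨M.q0, 0, 0, fun _ => 0, fun _ => 0⟩ c ∧ c.q ∈ M.F

/-- The language accepted by the Janus automaton `M`. -/
def JFA.Lang {k : ℕ} {A : Type} (M : JFA k A) : Set (List A) := {w | M.Accepts w}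
/-! ## Part 1: a small program language and its compilation to Janus automata -/

namespace Janus

inductive Ins (k : ℕ) (A : Type) : Type
  | reset (c : Fin k)
  | once (P : JSym A → JSym A → Bool) (d1 d2 : HInstr)
  | loop (c : Fin k) (P : JSym A → JSym A → Bool) (d1 d2 : HInstr)

def delta {k : ℕ} {A : Type} (prog : List (Ins k A)) (q : Fin (prog.length + 2))
    (a1 a2 : JSym A) (s : Fin k → Bool) :
    Fin (prog.length + 2) × (HInstr × HInstr) × (Fin k → CInstr) :=
  match prog[q.val]? with
  | none => (q, (.stay, .stay), fun _ => .keep)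
  | some (.reset c) =>
      (Fin.ofNat _ (q.val + 1), (.stay, .stay), fun i => if i = c then .reset else .keep)
  | some (.once P d1 d2) =>
      if P a1 a2 then (Fin.ofNat _ (q.val + 1), (d1, d2), fun _ => .keep)
      else (Fin.ofNat _ (prog.length + 1), (.stay, .stay), fun _ => .keep)
  | some (.loop c P d1 d2) =>
      if s c then
        (Fin.ofNat _ (q.val + 1), (.stay, .stay), fun i => if i = c then .inc else .keep)
      else if P a1 a2 then (q, (d1, d2), fun i => if i = c then .inc else .keep)
      else (Fin.ofNat _ (prog.length + 1), (.stay, .stay), fun _ => .keep)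

def mach {k : ℕ} {A : Type} (prog : List (Ins k A)) : JFA k A where
  Q := Fin (prog.length + 2)
  fin := inferInstance
  q0 := Fin.ofNat _ 0
  F := {q | q.val = prog.length}
  δ := delta prog

def mvH (n : ℕ) (d1 d2 : HInstr) (h : ℕ × ℕ) : ℕ × ℕ :=
  if 0 ≤ (h.1 : ℤ) + d1.toInt ∧ (h.1 : ℤ) + d1.toInt ≤ (h.2 : ℤ) + d2.toInt ∧
      (h.2 : ℤ) + d2.toInt ≤ (n : ℤ) + 1
  then (((h.1 : ℤ) + d1.toInt).toNat, ((h.2 : ℤ) + d2.toInt).toNat) else h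

theorem mvH_stay (n : ℕ) (h : ℕ × ℕ) : mvH n .stay .stay h = h := by
  unfold mvH; split <;> simp [HInstr.toInt]

theorem mvH_valid {n : ℕ} (d1 d2 : HInstr) {h : ℕ × ℕ} (h1 : h.1 ≤ h.2) (h2 : h.2 ≤ n + 1) :
    (mvH n d1 d2 h).1 ≤ (mvH n d1 d2 h).2 ∧ (mvH n d1 d2 h).2 ≤ n + 1 := by
  unfold mvH; split
  · constructor <;> simp only <;> omega
  · exact ⟨h1, h2⟩

def stepP {A : Type} (w : List A) (P : JSym A → JSym A → Bool) (d1 d2 : HInstr)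
    (h : ℕ × ℕ) : Option (ℕ × ℕ) :=
  if P (tapeSym w h.1) (tapeSym w h.2) then some (mvH w.length d1 d2 h) else none

def iter (f : ℕ × ℕ → Option (ℕ × ℕ)) : ℕ → ℕ × ℕ → Option (ℕ × ℕ)
  | 0, h => some h
  | n + 1, h => (f h).bind (iter f n)

def HV {A : Type} (w : List A) (h : ℕ × ℕ) : Prop := h.1 ≤ h.2 ∧ h.2 ≤ w.length + 1

theorem stepP_valid {A : Type} {w : List A} {P d1 d2} {h h' : ℕ × ℕ}
    (hs : stepP w P d1 d2 h = some h') (hv : HV w h) : HV w h' := by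
  unfold stepP at hs
  split at hs
  · simp only [Option.some.injEq] at hs
    subst hs; exact mvH_valid _ _ hv.1 hv.2
  · simp at hs

theorem iter_valid {A : Type} {w : List A} {P d1 d2} (j : ℕ) {h h' : ℕ × ℕ}
    (hs : iter (stepP w P d1 d2) j h = some h') (hv : HV w h) : HV w h' := by
  induction j generalizing h with
  | zero => simp only [iter, Option.some.injEq] at hs; subst hs; exact hv
  | succ j ih =>
    simp only [iter, Option.bind_eq_some_iff] at hs
    obtain ⟨h1, e1, e2⟩ := hs
    exact ih e2 (stepP_valid e1 hv)

def Runs {k : ℕ} {A : Type} (w : List A) : List (Ins k A) → ℕ × ℕ → (Fin k → ℕ) → Prop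
  | [], _, _ => True
  | .reset c :: L, h, C => ∃ v ≤ w.length, Runs w L h (Function.update C c v)
  | .once P d1 d2 :: L, h, C => ∃ h', stepP w P d1 d2 h = some h' ∧ Runs w L h' C
  | .loop c P d1 d2 :: L, h, C => ∃ h', iter (stepP w P d1 d2) (C c) h = some h' ∧ Runs w L h' C

def Acc {k : ℕ} {A : Type} (M : JFA k A) (w : List A) (c : JConfig k M.Q) : Prop :=
  ∃ c', Relation.ReflTransGen (JStep M w) c c' ∧ c'.q ∈ M.F

theorem Acc_iff {k : ℕ} {A : Type} {M : JFA k A} {w : List A} {c : JConfig k M.Q}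
    (hc : c.q ∉ M.F) : Acc M w c ↔ ∃ c', JStep M w c c' ∧ Acc M w c' := by
  constructor
  · rintro ⟨c', hr, hF⟩
    rcases Relation.ReflTransGen.cases_head hr with h | ⟨d, h1, h2⟩
    · subst h; exact absurd hF hc
    · exact ⟨d, h1, c', h2, hF⟩
  · rintro ⟨c', h1, d, h2, hF⟩
    exact ⟨d, Relation.ReflTransGen.head h1 h2, hF⟩

noncomputable instance : DecidableEq CInstr := fun _ _ => Classical.propDecidable _

/-- deterministic successor when nothing is reset -/
theorem JStep_det {k : ℕ} {A : Type} {M : JFA k A} {w : List A} {c c' : JConfig k M.Q}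
    {q' : M.Q} {d1 d2 : HInstr} {I : Fin k → CInstr}
    (hδ : M.δ c.q (tapeSym w c.h1) (tapeSym w c.h2) (fun i => decide (c.cval i = c.cbnd i))
      = (q', (d1, d2), I))
    (hI : ∀ i, I i ≠ .reset) (hv : JValid w c) :
    JStep M w c c' ↔ c' = ⟨q', (mvH w.length d1 d2 (c.h1, c.h2)).1,
      (mvH w.length d1 d2 (c.h1, c.h2)).2,
      fun i => if I i = .inc then (c.cval i + 1) % (c.cbnd i + 1) else c.cval i, c.cbnd⟩ := by
  have hm := mvH_valid (n := w.length) d1 d2 (h := (c.h1, c.h2)) hv.1 hv.2.1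
  have hmod : ∀ i, c.cval i % (c.cbnd i + 1) = c.cval i := fun i =>
    Nat.mod_eq_of_lt (Nat.lt_succ_of_le (hv.2.2 i).1)
  have hml : ∀ i, (c.cval i + 1) % (c.cbnd i + 1) ≤ c.cbnd i := fun i =>
    Nat.le_of_lt_succ (Nat.mod_lt _ (Nat.succ_pos _))
  unfold JStep
  simp only [hδ]
  constructor
  · rintro ⟨-, -, e1, e2, e3⟩
    obtain ⟨q, h1, h2, cv, cb⟩ := c'
    simp only at e1 e2 e3 ⊢
    have hh : (h1, h2) = mvH w.length d1 d2 (c.h1, c.h2) := by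
      unfold mvH
      split at e2
      · rename_i hc; rw [if_pos hc]; simp only [Prod.mk.injEq]; omega
      · rename_i hc; rw [if_neg hc]; simp [e2.1, e2.2]
    rw [← hh]
    have hb : cb = c.cbnd := by
      funext i
      have := e3 i
      have h2 := hI i
      cases hi : I i <;> simp_all
    have hvv : cv = fun i => if I i = .inc then (c.cval i + 1) % (c.cbnd i + 1) else c.cval i := by
      funext i
      have := e3 i
      have h2 := hI i
      cases hi : I i <;> simp_all
    subst hb hvv e1; rfl
  · rintro rfl
    refine ⟨hv, ⟨hm.1, hm.2, fun i => ⟨?_, (hv.2.2 i).2⟩⟩, rfl, ?_, ?_⟩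
    · simp only; split
      · exact hml i
      · exact (hv.2.2 i).1
    · simp only [mvH]
      split
      · simp only; omega
      · exact ⟨rfl, rfl⟩
    · intro i
      have h2 := hI i
      have h3 := hmod i
      cases hi : I i with
      | reset => exact absurd hi h2
      | keep => simp [h3, hi]
      | inc => simp only [hi, if_true]; exact ⟨trivial, trivial⟩

def cfg {k : ℕ} {A : Type} (prog : List (Ins k A)) (pc : ℕ) (h : ℕ × ℕ) (V C : Fin k → ℕ) :
    JConfig k (mach prog).Q := ⟨Fin.ofNat (prog.length + 2) pc, h.1, h.2, V, C⟩

theorem cfg_val {k : ℕ} {A : Type} (prog : List (Ins k A)) {pc : ℕ} (hpc : pc < prog.length + 2) :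
    (Fin.ofNat (prog.length + 2) pc).val = pc := by
  simp [Fin.ofNat, Nat.mod_eq_of_lt hpc]

theorem not_acc_rej {k : ℕ} {A : Type} {prog : List (Ins k A)} {w : List A} {h V C} :
    ¬ Acc (mach prog) w (cfg prog (prog.length + 1) h V C) := by
  rintro ⟨c', hr, hF⟩
  have : c'.q.val = prog.length + 1 := by
    clear hF
    induction hr with
    | refl => exact cfg_val prog (by omega)
    | tail _ hs ih =>
      rename_i b c _
      have hq : c.q = (delta prog b.q (tapeSym w b.h1) (tapeSym w b.h2)
        (fun i => decide (b.cval i = b.cbnd i))).1 := hs.2.2.1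
      have hn : prog[b.q.val]? = none := by
        rw [List.getElem?_eq_none_iff]; omega
      rw [hq]
      unfold delta
      rw [hn]
      exact ih
  have hF' : c'.q.val = prog.length := hF
  omega

theorem cfg_not_F {k : ℕ} {A : Type} {prog : List (Ins k A)} {pc : ℕ} {i : Ins k A}
    (hp : prog[pc]? = some i) (h : ℕ × ℕ) (V C : Fin k → ℕ) :
    (cfg prog pc h V C).q ∉ (mach prog).F := by
  intro hF
  have hlt : pc < prog.length := (List.getElem?_eq_some_iff.1 hp).1
  have hF' : (Fin.ofNat (prog.length + 2) pc).val = prog.length := hF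
  rw [cfg_val prog (by omega)] at hF'
  omega

theorem acc_det {k : ℕ} {A : Type} {prog : List (Ins k A)} {w : List A} {pc pc' : ℕ} {i : Ins k A}
    (hp : prog[pc]? = some i) {h : ℕ × ℕ} {V C V' : Fin k → ℕ} {d1 d2 : HInstr}
    {I : Fin k → CInstr} (hv : JValid w (cfg prog pc h V C))
    (hδ : delta prog (Fin.ofNat (prog.length + 2) pc) (tapeSym w h.1) (tapeSym w h.2)
      (fun i => decide (V i = C i)) = (Fin.ofNat _ pc', (d1, d2), I))
    (hI : ∀ i, I i ≠ .reset)
    (hV : ∀ i, V' i = if I i = .inc then (V i + 1) % (C i + 1) else V i) :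
    Acc (mach prog) w (cfg prog pc h V C) ↔
      Acc (mach prog) w (cfg prog pc' (mvH w.length d1 d2 h) V' C) := by
  rw [Acc_iff (cfg_not_F hp h V C)]
  have key := fun c' => JStep_det (M := mach prog) (c := cfg prog pc h V C) (c' := c') hδ hI hv
  have hV' : V' = fun i => if I i = .inc then (V i + 1) % (C i + 1) else V i := funext hV
  constructor
  · rintro ⟨c', hs, ha⟩
    rw [key] at hs
    rw [hs] at ha
    subst hV'
    exact ha
  · intro ha
    refine ⟨_, (key _).2 rfl, ?_⟩
    subst hV'
    exact ha

theorem delta_eq {k : ℕ} {A : Type} {prog : List (Ins k A)} {pc : ℕ} {i : Ins k A}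
    (hp : prog[pc]? = some i) : (Fin.ofNat (prog.length + 2) pc).val = pc := by
  have hlt : pc < prog.length := (List.getElem?_eq_some_iff.1 hp).1
  exact cfg_val prog (by omega)

theorem acc_once {k : ℕ} {A : Type} {prog : List (Ins k A)} {w : List A} {pc : ℕ} {P d1 d2}
    (hp : prog[pc]? = some (.once P d1 d2)) {h : ℕ × ℕ} {C : Fin k → ℕ}
    (hv : HV w h) (hC : ∀ i, C i ≤ w.length) :
    Acc (mach prog) w (cfg prog pc h (fun _ => 0) C) ↔
      ∃ h', stepP w P d1 d2 h = some h' ∧ Acc (mach prog) w (cfg prog (pc + 1) h' (fun _ => 0) C) := by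
  have hvv : JValid w (cfg prog pc h (fun _ => 0) C) := ⟨hv.1, hv.2, fun i => ⟨Nat.zero_le _, hC i⟩⟩
  have e := delta_eq hp
  by_cases hP : P (tapeSym w h.1) (tapeSym w h.2) = true
  · rw [acc_det hp (pc' := pc + 1) (d1 := d1) (d2 := d2) (I := fun _ => .keep)
      (V' := fun _ => 0) hvv (by simp only [delta, e, hp, hP, if_true]) (by simp) (by simp)]
    simp [stepP, hP]
  · rw [acc_det hp (pc' := prog.length + 1) (d1 := .stay) (d2 := .stay) (I := fun _ => .keep)
      (V' := fun _ => 0) hvv (by simp only [delta, e, hp, hP]; rfl) (by simp) (by simp)]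
    simp [stepP, hP, not_acc_rej]

theorem acc_loop {k : ℕ} {A : Type} {prog : List (Ins k A)} {w : List A} {pc : ℕ} {c P d1 d2}
    (hp : prog[pc]? = some (.loop c P d1 d2)) {h : ℕ × ℕ} {C : Fin k → ℕ}
    (hv : HV w h) (hC : ∀ i, C i ≤ w.length) (j : ℕ) (hj : j ≤ C c) :
    Acc (mach prog) w (cfg prog pc h (fun i => if i = c then C c - j else 0) C) ↔
      ∃ h', iter (stepP w P d1 d2) j h = some h' ∧
        Acc (mach prog) w (cfg prog (pc + 1) h' (fun _ => 0) C) := by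
  have e := delta_eq hp
  induction j generalizing h with
  | zero =>
    have hvv : JValid w (cfg prog pc h (fun i => if i = c then C c - 0 else 0) C) :=
      ⟨hv.1, hv.2, fun i => ⟨by simp only [cfg]; split <;> simp_all, hC i⟩⟩
    rw [acc_det hp (pc' := pc + 1) (d1 := .stay) (d2 := .stay)
      (I := fun i => if i = c then .inc else .keep)
      (V' := fun _ => 0) hvv (by simp only [delta, e, hp]; simp) (by intro i; split <;> simp)
      (by intro i; by_cases hi : i = c <;> simp [hi])]
    simp [iter, mvH_stay]
  | succ j ih =>
    have hvv : JValid w (cfg prog pc h (fun i => if i = c then C c - (j + 1) else 0) C) :=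
      ⟨hv.1, hv.2, fun i => ⟨by simp only [cfg]; split <;> simp_all, hC i⟩⟩
    have hne : ¬ (C c - (j + 1) = C c) := by omega
    by_cases hP : P (tapeSym w h.1) (tapeSym w h.2) = true
    · rw [acc_det hp (pc' := pc) (d1 := d1) (d2 := d2)
        (I := fun i => if i = c then .inc else .keep)
        (V' := fun i => if i = c then C c - j else 0) hvv (by simp only [delta, e, hp]; simp [hne, hP])
        (by intro i; split <;> simp)
        (by
          intro i
          by_cases hi : i = c
          · subst hi
            simp only [if_true]
            rw [Nat.mod_eq_of_lt (by omega)]; omega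
          · simp [hi])]
      have hst : stepP w P d1 d2 h = some (mvH w.length d1 d2 h) := by simp [stepP, hP]
      have hj' : j ≤ C c := by omega
      refine (ih (stepP_valid hst hv) hj').trans ?_
      simp [iter, hst]
    · rw [acc_det hp (pc' := prog.length + 1) (d1 := .stay) (d2 := .stay) (I := fun _ => .keep)
        (V' := fun i => if i = c then C c - (j + 1) else 0) hvv
        (by simp only [delta, e, hp]; simp [hne, hP]) (by simp) (by simp)]
      simp [iter, stepP, hP, not_acc_rej]

theorem acc_reset {k : ℕ} {A : Type} {prog : List (Ins k A)} {w : List A} {pc : ℕ} {c}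
    (hp : prog[pc]? = some (.reset c)) {h : ℕ × ℕ} {C : Fin k → ℕ}
    (hv : HV w h) (hC : ∀ i, C i ≤ w.length) :
    Acc (mach prog) w (cfg prog pc h (fun _ => 0) C) ↔
      ∃ v ≤ w.length,
        Acc (mach prog) w (cfg prog (pc + 1) h (fun _ => 0) (Function.update C c v)) := by
  have e := delta_eq hp
  have hvv : JValid w (cfg prog pc h (fun _ => 0) C) := ⟨hv.1, hv.2, fun i => ⟨Nat.zero_le _, hC i⟩⟩
  rw [Acc_iff (cfg_not_F hp h _ C)]
  have hδ : (mach prog).δ (cfg prog pc h (fun _ => 0) C).q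
      (tapeSym w (cfg prog pc h (fun _ => 0) C).h1) (tapeSym w (cfg prog pc h (fun _ => 0) C).h2)
      (fun i => decide ((cfg prog pc h (fun _ => 0) C).cval i =
        (cfg prog pc h (fun _ => 0) C).cbnd i)) =
      (Fin.ofNat _ (pc + 1), (.stay, .stay), fun i => if i = c then .reset else .keep) := by
    simp only [mach, cfg, delta, e, hp]
  have hb : 0 ≤ (h.1 : ℤ) ∧ (h.1 : ℤ) ≤ h.2 ∧ (h.2 : ℤ) ≤ (w.length : ℤ) + 1 := by
    have := hv.1; have := hv.2; omega
  constructor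
  · rintro ⟨c', hs, ha⟩
    obtain ⟨-, hv', e1, e2, e3⟩ := hs
    rw [hδ] at e1 e2 e3
    obtain ⟨q, h1, h2, cv, cb⟩ := c'
    simp only [cfg, HInstr.toInt, add_zero] at e1 e2 e3
    rw [if_pos hb] at e2
    refine ⟨cb c, (hv'.2.2 c).2, ?_⟩
    have hcv : cv = fun _ => 0 := by
      funext i
      have := e3 i
      by_cases hi : i = c <;> simp_all
    have hcb : cb = Function.update C c (cb c) := by
      funext i
      have := e3 i
      by_cases hi : i = c <;> simp_all
    have h1e : h1 = h.1 := by omega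
    have h2e : h2 = h.2 := by omega
    rw [← hcb]
    subst e1 hcv h1e h2e
    exact ha
  · rintro ⟨v, hvl, ha⟩
    refine ⟨_, ?_, ha⟩
    unfold JStep
    rw [hδ]
    refine ⟨hvv, ⟨hv.1, hv.2, fun i => ⟨Nat.zero_le _, ?_⟩⟩, rfl, ?_, ?_⟩
    · by_cases hi : i = c
      · subst hi; simpa [cfg] using hvl
      · simpa [cfg, hi] using hC i
    · simp only [cfg, HInstr.toInt, add_zero]
      rw [if_pos hb]; exact ⟨trivial, trivial⟩
    · intro i
      by_cases hi : i = c
      · subst hi; simpa [cfg] using hvl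
      · simp [cfg, hi]

theorem Acc_Runs {k : ℕ} {A : Type} {prog : List (Ins k A)} {w : List A} (L : List (Ins k A))
    (pc : ℕ) (hpc : pc ≤ prog.length) (hL : prog.drop pc = L) (h : ℕ × ℕ) (C : Fin k → ℕ)
    (hv : HV w h) (hC : ∀ i, C i ≤ w.length) :
    Acc (mach prog) w (cfg prog pc h (fun _ => 0) C) ↔ Runs w L h C := by
  induction L generalizing pc h C with
  | nil =>
    have hl : prog.length ≤ pc := List.drop_eq_nil_iff.1 hL
    have : pc = prog.length := by omega
    subst this
    simp only [Runs, iff_true]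
    exact ⟨_, Relation.ReflTransGen.refl, cfg_val prog (by omega)⟩
  | cons i L ih =>
    have hp : prog[pc]? = some i := by
      have := congrArg (fun l => l[0]?) hL
      simpa using this
    have hlt : pc < prog.length := (List.getElem?_eq_some_iff.1 hp).1
    have hL' : prog.drop (pc + 1) = L := by
      have := congrArg List.tail hL
      simpa using this
    cases i with
    | reset c =>
      rw [acc_reset hp hv hC]
      simp only [Runs]
      refine exists_congr fun v => and_congr_right fun hvl => ?_
      refine ih (pc + 1) hlt hL' h _ hv ?_
      intro i
      by_cases hi : i = c
      · subst hi; simpa using hvl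
      · simpa [hi] using hC i
    | once P d1 d2 =>
      rw [acc_once hp hv hC]
      simp only [Runs]
      refine exists_congr fun h' => and_congr_right fun hs => ?_
      exact ih (pc + 1) hlt hL' h' _ (stepP_valid hs hv) hC
    | loop c P d1 d2 =>
      have := acc_loop hp hv hC (C c) le_rfl
      simp only [Nat.sub_self, ite_self] at this
      rw [this]
      simp only [Runs]
      refine exists_congr fun h' => and_congr_right fun hs => ?_
      exact ih (pc + 1) hlt hL' h' _ (iter_valid _ hs hv) hC

theorem accepts_iff {k : ℕ} {A : Type} (prog : List (Ins k A)) (w : List A) :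
    (mach prog).Accepts w ↔ Runs w prog (0, 0) (fun _ => 0) := by
  rw [← Acc_Runs (prog := prog) (w := w) prog 0 (Nat.zero_le _) rfl (0, 0) (fun _ => 0)
    ⟨le_rfl, Nat.zero_le _⟩ (fun _ => Nat.zero_le _)]
  rfl

end Janus

/-! ## Part 2: blocks, counter allocation -/

namespace Janus

structure Op (A : Type) where
  single : Bool
  P : JSym A → JSym A → Bool
  d1 : HInstr
  d2 : HInstr

def runOp {A : Type} (w : List A) (v : ℕ) (o : Op A) (h : ℕ × ℕ) : Option (ℕ × ℕ) :=
  iter (stepP w o.P o.d1 o.d2) (if o.single then 1 else v) h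

def runOps {A : Type} (w : List A) (v : ℕ) : List (Op A) → ℕ × ℕ → Option (ℕ × ℕ)
  | [], h => some h
  | o :: L, h => (runOp w v o h).bind (runOps w v L)

abbrev Blocks (A : Type) := List (ℕ × List (Op A))

def runB {A : Type} (w : List A) (ℓ : ℕ → ℕ) : Blocks A → ℕ × ℕ → Option (ℕ × ℕ)
  | [], h => some h
  | b :: L, h => (runOps w (ℓ b.1) b.2 h).bind (runB w ℓ L)

def toIns {k : ℕ} {A : Type} (c : Fin k) (o : Op A) : Ins k A :=
  if o.single then .once o.P o.d1 o.d2 else .loop c o.P o.d1 o.d2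

def comp {k : ℕ} {A : Type} (col : ℕ → Fin k) : List ℕ → Blocks A → List (Ins k A)
  | _, [] => []
  | seen, b :: L =>
      (if b.1 ∈ seen then [] else [.reset (col b.1)]) ++ (b.2.map (toIns (col b.1)) ++
        comp col (b.1 :: seen) L)

theorem Runs_ops {k : ℕ} {A : Type} (w : List A) (c : Fin k) (ops : List (Op A))
    (L : List (Ins k A)) (h : ℕ × ℕ) (C : Fin k → ℕ) :
    Runs w (ops.map (toIns c) ++ L) h C ↔
      ∃ h', runOps w (C c) ops h = some h' ∧ Runs w L h' C := by
  induction ops generalizing h with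
  | nil => simp [runOps]
  | cons o ops ih =>
    have : Runs w (toIns c o :: (ops.map (toIns c) ++ L)) h C ↔
        ∃ h', runOp w (C c) o h = some h' ∧ Runs w (ops.map (toIns c) ++ L) h' C := by
      unfold toIns runOp
      cases hs : o.single
      · simp [Runs]
      · simp only [if_true, Runs, iter]
        refine exists_congr fun h' => and_congr_left fun _ => ?_
        cases stepP w o.P o.d1 o.d2 h <;> simp
    rw [List.map_cons, List.cons_append, this]
    simp only [ih, runOps, Option.bind_eq_some_iff]
    constructor
    · rintro ⟨a, h1, b, h2, h3⟩; exact ⟨b, ⟨a, h1, h2⟩, h3⟩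
    · rintro ⟨b, ⟨a, h1, h2⟩, h3⟩; exact ⟨a, h1, b, h2, h3⟩

def GoodCol {k : ℕ} (col : ℕ → Fin k) : List ℕ → List ℕ → Prop
  | _, [] => True
  | seen, x :: T => (x ∉ seen → ∀ y ∈ seen, y ∈ T → col y ≠ col x) ∧ GoodCol col (x :: seen) T

theorem runB_congr {A : Type} (w : List A) (ℓ ℓ' : ℕ → ℕ) (B : Blocks A) (h : ℕ × ℕ)
    (hl : ∀ x ∈ B.map Prod.fst, ℓ x = ℓ' x) : runB w ℓ B h = runB w ℓ' B h := by
  induction B generalizing h with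
  | nil => rfl
  | cons b B ih =>
    simp only [runB]
    rw [hl b.1 (by simp)]
    congr 1
    funext h'
    exact ih h' (fun x hx => hl x (by simp at hx ⊢; exact Or.inr hx))

/-- the block part, once the counter of the current variable has been set -/
theorem Runs_comp {k : ℕ} {A : Type} (w : List A) (col : ℕ → Fin k) (B : Blocks A)
    (seen : List ℕ) (hg : GoodCol col seen (B.map Prod.fst)) (h : ℕ × ℕ) (C : Fin k → ℕ)
    (hC : ∀ i, C i ≤ w.length) :
    Runs w (comp col seen B) h C ↔
      ∃ ℓ : ℕ → ℕ, (∀ x, ℓ x ≤ w.length) ∧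
        (∀ y ∈ seen, y ∈ B.map Prod.fst → ℓ y = C (col y)) ∧ ∃ h', runB w ℓ B h = some h' := by
  induction B generalizing seen h C with
  | nil =>
    simp only [comp, Runs, runB, true_iff]
    exact ⟨fun _ => 0, fun _ => Nat.zero_le _, by simp, h, rfl⟩
  | cons b B ih =>
    obtain ⟨x, ops⟩ := b
    simp only [List.map_cons, GoodCol] at hg
    obtain ⟨hg1, hg2⟩ := hg
    -- the part after a possible reset
    have key : ∀ C : Fin k → ℕ, (∀ i, C i ≤ w.length) →
        (Runs w (ops.map (toIns (col x)) ++ comp col (x :: seen) B) h C ↔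
        ∃ ℓ : ℕ → ℕ, (∀ x, ℓ x ≤ w.length) ∧
          (∀ y ∈ x :: seen, y ∈ x :: B.map Prod.fst → ℓ y = C (col y)) ∧
            ∃ h', runB w ℓ ((x, ops) :: B) h = some h') := by
      intro C hC
      rw [Runs_ops]
      constructor
      · rintro ⟨h1, e1, hr⟩
        rw [ih _ hg2 _ _ hC] at hr
        obtain ⟨ℓ, hℓ, hag, h', e2⟩ := hr
        refine ⟨Function.update ℓ x (C (col x)), ?_, ?_, h', ?_⟩
        · intro y
          by_cases hy : y = x
          · subst hy; simpa using hC _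
          · simpa [hy] using hℓ y
        · intro y hy1 hy2
          by_cases hy : y = x
          · subst hy; simp
          · have : y ∈ B.map Prod.fst := by
              rcases List.mem_cons.1 hy2 with h | h
              · exact absurd h hy
              · exact h
            simpa [hy] using hag y hy1 this
        · simp only [runB, Function.update_self, e1, Option.bind_some]
          rw [← e2]
          apply runB_congr
          intro y hy
          by_cases hyx : y = x
          · subst hyx; simp [hag y (by simp) hy]
          · simp [hyx]
      · rintro ⟨ℓ, hℓ, hag, h', e⟩
        simp only [runB, Option.bind_eq_some_iff] at e
        obtain ⟨h1, e1, e2⟩ := e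
        rw [hag x (by simp) (by simp)] at e1
        refine ⟨h1, e1, (ih _ hg2 _ _ hC).2 ⟨ℓ, hℓ, ?_, h', e2⟩⟩
        intro y hy1 hy2
        exact hag y hy1 (List.mem_cons_of_mem _ hy2)
    simp only [comp, List.map_cons]
    by_cases hx : x ∈ seen
    · rw [if_pos hx, List.nil_append, key C hC]
      refine exists_congr fun ℓ => and_congr_right fun _ => and_congr_left fun _ => ?_
      constructor
      · intro H y hy; exact H y (List.mem_cons_of_mem _ hy)
      · intro H y hy
        rcases List.mem_cons.1 hy with rfl | hy
        · exact H _ hx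
        · exact H y hy
    · rw [if_neg hx]
      simp only [List.cons_append, List.nil_append, Runs]
      have hC' : ∀ v ≤ w.length, ∀ i, Function.update C (col x) v i ≤ w.length := by
        intro v hv i
        by_cases hi : i = col x
        · subst hi; simpa using hv
        · simpa [hi] using hC i
      constructor
      · rintro ⟨v, hv, hr⟩
        rw [key _ (hC' v hv)] at hr
        obtain ⟨ℓ, hℓ, hag, hr⟩ := hr
        refine ⟨ℓ, hℓ, ?_, hr⟩
        intro y hy1 hy2
        have hyx : y ≠ x := by rintro rfl; exact hx hy1
        have hyB : y ∈ B.map Prod.fst := by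
          rcases List.mem_cons.1 hy2 with h | h
          · exact absurd h hyx
          · exact h
        rw [hag y (List.mem_cons_of_mem _ hy1) hy2, Function.update_of_ne (hg1 hx y hy1 hyB)]
      · rintro ⟨ℓ, hℓ, hag, hr⟩
        refine ⟨ℓ x, hℓ x, (key _ (hC' _ (hℓ x))).2 ⟨ℓ, hℓ, ?_, hr⟩⟩
        intro y hy1 hy2
        rcases List.mem_cons.1 hy1 with rfl | hy3
        · simp
        · have hyx : y ≠ x := by rintro rfl; exact hx hy3
          have hyB : y ∈ B.map Prod.fst := by
            rcases List.mem_cons.1 hy2 with h | h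
            · exact absurd h hyx
            · exact h
          rw [Function.update_of_ne (hg1 hx y hy3 hyB)]
          exact hag y hy3 hy2

def Bnd (k : ℕ) : List ℕ → List ℕ → Prop
  | _, [] => True
  | seen, x :: T => ((seen.toFinset ∩ T.toFinset).erase x).card ≤ k ∧ Bnd k (x :: seen) T

theorem exists_col (k : ℕ) (D seen : List ℕ) (hb : Bnd k seen D) (col0 : ℕ → Fin (k + 1)) :
    ∃ col : ℕ → Fin (k + 1), (∀ y ∈ seen, col y = col0 y) ∧ GoodCol col seen D := by
  induction D generalizing seen col0 with
  | nil => exact ⟨col0, fun _ _ => rfl, trivial⟩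
  | cons x T ih =>
    obtain ⟨hb1, hb2⟩ := hb
    by_cases hx : x ∈ seen
    · obtain ⟨col, h1, h2⟩ := ih _ hb2 col0
      exact ⟨col, fun y hy => h1 y (List.mem_cons_of_mem _ hy), fun h => absurd hx h, h2⟩
    · have : ∃ c : Fin (k + 1), c ∉ (((seen.toFinset ∩ T.toFinset).erase x).image col0) := by
        by_contra hcon
        push Not at hcon
        have h1 : (Finset.univ : Finset (Fin (k + 1))) ⊆
            (((seen.toFinset ∩ T.toFinset).erase x).image col0) := fun c _ => hcon c
        have h2 := Finset.card_le_card h1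
        have h3 := Finset.card_image_le (s := (seen.toFinset ∩ T.toFinset).erase x) (f := col0)
        simp only [Finset.card_univ, Fintype.card_fin] at h2
        omega
      obtain ⟨c, hc⟩ := this
      obtain ⟨col, h1, h2⟩ := ih _ hb2 (Function.update col0 x c)
      have h3 : ∀ y ∈ seen, col y = col0 y := by
        intro y hy
        have hyx : y ≠ x := by rintro rfl; exact hx hy
        rw [h1 y (List.mem_cons_of_mem _ hy), Function.update_of_ne hyx]
      refine ⟨col, h3, ?_, h2⟩
      intro _ y hy hyT heq
      have hyx : y ≠ x := by rintro rfl; exact hx hy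
      rw [h3 y hy, h1 x (by simp), Function.update_self] at heq
      apply hc
      rw [← heq]
      exact Finset.mem_image_of_mem _ (by simp [hyx, hy, hyT])

theorem Bnd_of_sVal (k : ℕ) (D : List ℕ) (hs : ∀ i < D.length, sVal D i ≤ k) (j : ℕ) :
    ∀ i, i + j = D.length → Bnd k (D.take i).reverse (D.drop i) := by
  induction j with
  | zero =>
    intro i hi
    have : D.drop i = [] := List.drop_eq_nil_iff.2 (by omega)
    rw [this]; trivial
  | succ j ih =>
    intro i hi
    have hlt : i < D.length := by omega
    rw [List.drop_eq_getElem_cons hlt]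
    refine ⟨?_, ?_⟩
    · refine le_trans (Finset.card_le_card ?_) (hs i hlt)
      intro y hy
      simp only [Finset.mem_erase, Finset.mem_inter, List.mem_toFinset, List.mem_reverse] at hy
      obtain ⟨hne, h1, h2⟩ := hy
      simp only [Finset.mem_filter, List.mem_toFinset]
      refine ⟨List.mem_of_mem_take h1, ?_, ?_, ?_⟩
      · rw [List.getD_eq_getElem _ _ hlt]; exact hne
      · obtain ⟨a, ha, e⟩ := List.mem_iff_getElem.1 h1
        rw [List.length_take] at ha
        refine ⟨a, by omega, ?_⟩
        rw [List.getD_eq_getElem _ _ (by omega), ← e, List.getElem_take]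
      · obtain ⟨a, ha, e⟩ := List.mem_iff_getElem.1 h2
        rw [List.length_drop] at ha
        refine ⟨i + 1 + a, by omega, by omega, ?_⟩
        rw [List.getD_eq_getElem _ _ (by omega), ← e, List.getElem_drop]
    · have := ih (i + 1) (by omega)
      rw [List.take_succ_eq_append_getElem hlt, List.reverse_append] at this
      simpa using this

/-- The automaton for a list of blocks. -/
theorem exists_machine {A : Type} (α : List ℕ) (Δ : List (List (ℕ × Marker))) (B : Blocks A)
    (hB : B.map Prod.fst = hmiVars α Δ) :
    ∃ M : JFA (cnOf α Δ + 1) A, ∀ w : List A, M.Accepts w ↔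
      ∃ ℓ : ℕ → ℕ, (∀ x, ℓ x ≤ w.length) ∧ ∃ h', runB w ℓ B (1, 1) = some h' := by
  have hs : ∀ i < (hmiVars α Δ).length, sVal (hmiVars α Δ) i ≤ cnOf α Δ := fun i hi =>
    Finset.le_sup (f := sVal (hmiVars α Δ)) (Finset.mem_range.2 hi)
  have hb := Bnd_of_sVal _ _ hs (hmiVars α Δ).length 0 (by simp)
  obtain ⟨col, -, hg⟩ := exists_col _ _ _ hb (fun _ => 0)
  simp only [List.take_zero, List.reverse_nil, List.drop_zero] at hg
  refine ⟨mach (.once (fun _ _ => true) .right .right :: comp col [] B), fun w => ?_⟩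
  rw [accepts_iff]
  have hst : stepP w (fun _ _ => true) .right .right (0, 0) = some (1, 1) := by
    simp [stepP, mvH, HInstr.toInt]
  simp only [Runs, hst, Option.some.injEq, exists_eq_left']
  rw [Runs_comp w col B [] (hB ▸ hg) (1, 1) _ (fun _ => Nat.zero_le _)]
  simp

end Janus

/-! ## Part 3: head movements in terms of gaps of the pattern -/

namespace Janus

theorem tapeSym_pos {A : Type} (w : List A) {h : ℕ} (hh : 1 ≤ h) (a : A) :
    tapeSym w h = .ch a ↔ w[h - 1]? = some a := by
  unfold tapeSym
  rw [if_neg (by omega)]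
  cases w[h - 1]? <;> simp

theorem tapeSym_rend {A : Type} (w : List A) {h : ℕ} (hh : 1 ≤ h) :
    tapeSym w h = .rend ↔ w.length + 1 ≤ h := by
  unfold tapeSym
  rw [if_neg (by omega)]
  cases e : w[h - 1]? with
  | none =>
    rw [List.getElem?_eq_none_iff] at e
    simp only [true_iff]; omega
  | some a =>
    obtain ⟨h1, -⟩ := List.getElem?_eq_some_iff.1 e
    simp only [reduceCtorEq, false_iff]; omega

open Classical in
noncomputable def pNotEnd {A : Type} (_ a2 : JSym A) : Bool := decide (a2 ≠ .rend)

open Classical in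
noncomputable def pEnd {A : Type} (_ a2 : JSym A) : Bool := decide (a2 = .rend)

open Classical in
noncomputable def pEq {A : Type} (a1 a2 : JSym A) : Bool := decide (∃ a, a1 = .ch a ∧ a2 = .ch a)

theorem stepP_some {A : Type} {w : List A} {P : JSym A → JSym A → Bool} {d1 d2 : HInstr}
    {h1 h2 k1 k2 : ℕ} (hP : P (tapeSym w h1) (tapeSym w h2) = true)
    (e1 : (h1 : ℤ) + d1.toInt = k1) (e2 : (h2 : ℤ) + d2.toInt = k2) (hk : k1 ≤ k2)
    (hn : k2 ≤ w.length + 1) : stepP w P d1 d2 (h1, h2) = some (k1, k2) := by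
  have : mvH w.length d1 d2 (h1, h2) = (k1, k2) := by
    unfold mvH
    rw [if_pos (by simp only; omega)]
    simp [e1, e2]
  unfold stepP
  rw [if_pos hP, this]

theorem iter_loRight {A : Type} (w : List A) (v h1 h2 : ℕ) (hh : h1 + v ≤ h2)
    (hn : h2 ≤ w.length + 1) :
    iter (stepP w (fun _ _ => true) .right .stay) v (h1, h2) = some (h1 + v, h2) := by
  induction v generalizing h1 with
  | zero => rfl
  | succ v ih =>
    have : stepP w (fun _ _ => true) .right .stay (h1, h2) = some (h1 + 1, h2) := by
      refine stepP_some rfl ?_ ?_ ?_ ?_ <;> (try simp only [HInstr.toInt]) <;> omega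
    simp only [iter, this, Option.bind_some]
    rw [ih (h1 + 1) (by omega)]; simp; omega

theorem iter_loLeft {A : Type} (w : List A) (v h1 h2 : ℕ) (hh : h1 + v ≤ h2)
    (hn : h2 ≤ w.length + 1) :
    iter (stepP w (fun _ _ => true) .left .stay) v (h1 + v, h2) = some (h1, h2) := by
  induction v with
  | zero => rfl
  | succ v ih =>
    have : stepP w (fun _ _ => true) .left .stay (h1 + (v + 1), h2) = some (h1 + v, h2) := by
      refine stepP_some rfl ?_ ?_ ?_ ?_ <;> (try simp only [HInstr.toInt]) <;> omega
    simp only [iter, this, Option.bind_some]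
    exact ih (by omega)

theorem iter_hiLeft {A : Type} (w : List A) (v h1 h2 : ℕ) (hh : h1 ≤ h2)
    (hn : h2 + v ≤ w.length + 1) :
    iter (stepP w (fun _ _ => true) .stay .left) v (h1, h2 + v) = some (h1, h2) := by
  induction v with
  | zero => rfl
  | succ v ih =>
    have : stepP w (fun _ _ => true) .stay .left (h1, h2 + (v + 1)) = some (h1, h2 + v) := by
      refine stepP_some rfl ?_ ?_ ?_ ?_ <;> (try simp only [HInstr.toInt]) <;> omega
    simp only [iter, this, Option.bind_some]
    exact ih (by omega)

theorem iter_hiRight {A : Type} (w : List A) (v h1 h2 : ℕ) (hh : h1 ≤ h2) (h0 : 1 ≤ h2)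
    (hn : h2 ≤ w.length + 1) (h' : ℕ × ℕ) :
    iter (stepP w pNotEnd .stay .right) v (h1, h2) = some h' ↔
      h2 + v ≤ w.length + 1 ∧ h' = (h1, h2 + v) := by
  induction v generalizing h2 with
  | zero => simp [iter, hn, eq_comm]
  | succ v ih =>
    by_cases he : h2 = w.length + 1
    · have : stepP w pNotEnd .stay .right (h1, h2) = none := by
        simp [stepP, pNotEnd, (tapeSym_rend w h0).2 (by omega)]
      simp only [iter, this, Option.bind_none]
      simp; omega
    · have : stepP w pNotEnd .stay .right (h1, h2) = some (h1, h2 + 1) := by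
        have h3 : tapeSym w h2 ≠ .rend := fun h => by
          have := (tapeSym_rend w h0).1 h; omega
        refine stepP_some (by simp [pNotEnd, h3]) ?_ ?_ ?_ ?_ <;>
          (try simp only [HInstr.toInt]) <;> omega
      simp only [iter, this, Option.bind_some]
      rw [ih (h2 + 1) (by omega) (by omega) (by omega)]
      have e1 : h2 + 1 + v = h2 + (v + 1) := by omega
      rw [e1]

theorem iter_match {A : Type} (w : List A) (v h1 h2 : ℕ) (hh : h1 ≤ h2)
    (hn : h2 ≤ w.length) (h' : ℕ × ℕ) :
    iter (stepP w pEq .right .right) v (h1 + 1, h2 + 1) = some h' ↔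
      (h2 + v ≤ w.length ∧ ∀ t < v, w[h1 + t]? = w[h2 + t]?) ∧
        h' = (h1 + 1 + v, h2 + 1 + v) := by
  induction v generalizing h1 h2 with
  | zero => simp [iter, hn, eq_comm]
  | succ v ih =>
    by_cases he : ∃ a, w[h1]? = some a ∧ w[h2]? = some a
    · obtain ⟨a, ha1, ha2⟩ := he
      have hlt : h2 < w.length := (List.getElem?_eq_some_iff.1 ha2).1
      have : stepP w pEq .right .right (h1 + 1, h2 + 1) = some (h1 + 1 + 1, h2 + 1 + 1) := by
        have h3 : ∃ a, tapeSym w (h1 + 1) = .ch a ∧ tapeSym w (h2 + 1) = .ch a :=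
          ⟨a, (tapeSym_pos w (by omega) a).2 ha1, (tapeSym_pos w (by omega) a).2 ha2⟩
        refine stepP_some (by simp only [pEq, h3, decide_true]) ?_ ?_ ?_ ?_ <;>
          (try simp only [HInstr.toInt]) <;> omega
      simp only [iter, this, Option.bind_some]
      rw [ih (h1 + 1) (h2 + 1) (by omega) (by omega)]
      have e1 : h2 + 1 + v = h2 + (v + 1) := by omega
      have e2 : (h1 + 1 + 1 + v, h2 + 1 + 1 + v) = (h1 + 1 + (v + 1), h2 + 1 + (v + 1)) := by
        simp; omega
      rw [e1, e2]
      refine and_congr_left fun _ => and_congr_right fun _ => ?_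
      constructor
      · intro H t ht
        cases t with
        | zero => simp [ha1, ha2]
        | succ t =>
          have := H t (by omega)
          rw [show h1 + (t + 1) = h1 + 1 + t by omega, show h2 + (t + 1) = h2 + 1 + t by omega]
          exact this
      · intro H t ht
        have := H (t + 1) (by omega)
        rw [show h1 + 1 + t = h1 + (t + 1) by omega, show h2 + 1 + t = h2 + (t + 1) by omega]
        exact this
    · have : stepP w pEq .right .right (h1 + 1, h2 + 1) = none := by
        have h3 : ¬ ∃ a, tapeSym w (h1 + 1) = .ch a ∧ tapeSym w (h2 + 1) = .ch a := by
          rintro ⟨a, h1, h2⟩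
          exact he ⟨a, (tapeSym_pos w (by omega) a).1 h1, (tapeSym_pos w (by omega) a).1 h2⟩
        simp [stepP, pEq, h3]
      simp only [iter, this, Option.bind_none, reduceCtorEq, false_iff]
      rintro ⟨⟨hle, H⟩, -⟩
      have hlt : h2 < w.length := by omega
      have H0 := H 0 (by omega)
      simp only [add_zero] at H0
      exact he ⟨w[h2], by rw [H0, List.getElem?_eq_getElem hlt], List.getElem?_eq_getElem hlt⟩

theorem step_end {A : Type} (w : List A) (h1 h2 : ℕ) (h0 : 1 ≤ h2)
    (hn : h2 ≤ w.length + 1) (h' : ℕ × ℕ) :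
    iter (stepP w pEnd .stay .stay) 1 (h1, h2) = some h' ↔
      h2 = w.length + 1 ∧ h' = (h1, h2) := by
  have e : h2 = w.length + 1 ↔ tapeSym w h2 = .rend := by
    rw [tapeSym_rend w h0]; omega
  rw [e]
  by_cases hr : tapeSym w h2 = .rend
  · simp [iter, stepP, pEnd, hr, mvH_stay, eq_comm]
  · simp [iter, stepP, pEnd, hr]

/-- prefix sums of the lengths -/
def S (α : List ℕ) (ℓ : ℕ → ℕ) (j : ℕ) : ℕ := ((α.take j).map ℓ).sum

theorem S_succ (α : List ℕ) (ℓ : ℕ → ℕ) {q : ℕ} (hq : q < α.length) :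
    S α ℓ (q + 1) = S α ℓ q + ℓ (patAt α (q + 1)) := by
  unfold S patAt
  rw [List.take_succ_eq_append_getElem hq]
  rw [List.map_append, List.sum_append, Nat.add_sub_cancel, List.getD_eq_getElem _ _ hq]
  rfl

theorem S_mono (α : List ℕ) (ℓ : ℕ → ℕ) : Monotone (S α ℓ) := by
  refine monotone_nat_of_le_succ fun q => ?_
  by_cases hq : q < α.length
  · rw [S_succ α ℓ hq]; omega
  · unfold S
    rw [List.take_of_length_le (by omega), List.take_of_length_le (by omega)]

theorem S_le (α : List ℕ) (ℓ : ℕ → ℕ) (j : ℕ) : S α ℓ j ≤ S α ℓ α.length := by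
  by_cases hj : j ≤ α.length
  · exact S_mono α ℓ hj
  · unfold S
    rw [List.take_of_length_le (by omega), List.take_of_length_le (by omega)]

def pos (α : List ℕ) (ℓ : ℕ → ℕ) (g : ℕ × ℕ) : ℕ × ℕ :=
  (S α ℓ (min g.1 g.2) + 1, S α ℓ (max g.1 g.2) + 1)

def Kok {A : Type} (w : List A) (α : List ℕ) (ℓ : ℕ → ℕ) (k : ℕ × ℕ) : Prop :=
  S α ℓ k.2 ≤ w.length ∧
  (∀ t < ℓ (patAt α k.2), w[S α ℓ (k.1 - 1) + t]? = w[S α ℓ (k.2 - 1) + t]?) ∧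
  (k.2 = α.length → S α ℓ α.length = w.length)

def Sp {A : Type} (w : List A) (α : List ℕ) (ℓ : ℕ → ℕ) (f : ℕ × ℕ → Option (ℕ × ℕ))
    (g g' : ℕ × ℕ) (K : List (ℕ × ℕ)) : Prop :=
  S α ℓ (max g.1 g.2) ≤ w.length →
    (∀ h', f (pos α ℓ g) = some h' →
      h' = pos α ℓ g' ∧ S α ℓ (max g'.1 g'.2) ≤ w.length ∧ ∀ k ∈ K, Kok w α ℓ k) ∧
    (S α ℓ α.length = w.length → (∀ k ∈ K, Kok w α ℓ k) → f (pos α ℓ g) = some (pos α ℓ g'))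

section
variable {A : Type} {w : List A} {α : List ℕ} {ℓ : ℕ → ℕ}

theorem Sp_id (g : ℕ × ℕ) : Sp w α ℓ some g g [] := by
  intro hg
  exact ⟨fun h' e => ⟨(Option.some.inj e).symm, hg, by simp⟩, fun _ _ => rfl⟩

theorem Sp_comp {f1 f2 : ℕ × ℕ → Option (ℕ × ℕ)} {g g1 g2 : ℕ × ℕ} {K1 K2 : List (ℕ × ℕ)}
    (h1 : Sp w α ℓ f1 g g1 K1) (h2 : Sp w α ℓ f2 g1 g2 K2) :
    Sp w α ℓ (fun h => (f1 h).bind f2) g g2 (K1 ++ K2) := by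
  intro hg
  obtain ⟨a1, b1⟩ := h1 hg
  constructor
  · intro h' e
    rw [Option.bind_eq_some_iff] at e
    obtain ⟨h, e1, e2⟩ := e
    obtain ⟨rfl, c1, d1⟩ := a1 h e1
    obtain ⟨e3, c2, d2⟩ := (h2 c1).1 h' e2
    refine ⟨e3, c2, fun k hk => ?_⟩
    rcases List.mem_append.1 hk with hk | hk
    · exact d1 k hk
    · exact d2 k hk
  · intro hS hK
    have e1 := b1 hS (fun k hk => hK k (by simp [hk]))
    have c1 : S α ℓ (max g1.1 g1.2) ≤ w.length := hS ▸ S_le α ℓ _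
    have e2 := (h2 c1).2 hS (fun k hk => hK k (by simp [hk]))
    simp [e1, e2]

theorem Sp_swap {f : ℕ × ℕ → Option (ℕ × ℕ)} {a b a' b' : ℕ} {K : List (ℕ × ℕ)}
    (h : Sp w α ℓ f (a, b) (a', b') K) : Sp w α ℓ f (b, a) (b', a') K := by
  unfold Sp pos at *
  simp only at *
  rw [max_comm b a, max_comm b' a', min_comm b a, min_comm b' a']
  exact h

end

/-- moving one virtual head over a variable to the right -/
theorem mvR {A : Type} (α : List ℕ) (q b : ℕ) (hq : q < α.length) :
    ∃ o : Op A, ∀ (w : List A) (ℓ : ℕ → ℕ),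
      Sp w α ℓ (runOp w (ℓ (patAt α (q + 1))) o) (q, b) (q + 1, b) [] := by
  by_cases hb : q < b
  · refine ⟨⟨false, fun _ _ => true, .right, .stay⟩, fun w ℓ hg => ?_⟩
    have e1 : min q b = q := by omega
    have e2 : max q b = b := by omega
    have e3 : min (q + 1) b = q + 1 := by omega
    have e4 : max (q + 1) b = b := by omega
    have hm : S α ℓ (q + 1) ≤ S α ℓ b := S_mono α ℓ hb
    simp only [e2] at hg
    have key : runOp w (ℓ (patAt α (q + 1))) ⟨false, fun _ _ => true, .right, .stay⟩
        (pos α ℓ (q, b)) = some (pos α ℓ (q + 1, b)) := by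
      simp only [pos, e1, e2, e3, e4, runOp]
      rw [S_succ α ℓ hq] at hm
      simp only [Bool.false_eq_true, if_false]
      rw [iter_loRight w _ _ _ (by omega) (by omega), S_succ α ℓ hq]
      simp; omega
    refine ⟨fun h' e => ⟨?_, by simpa only [e4] using hg, by simp⟩, fun _ _ => key⟩
    rw [key] at e; exact (Option.some.inj e).symm
  · refine ⟨⟨false, pNotEnd, .stay, .right⟩, fun w ℓ hg => ?_⟩
    have e1 : min q b = b := by omega
    have e2 : max q b = q := by omega
    have e3 : min (q + 1) b = b := by omega
    have e4 : max (q + 1) b = q + 1 := by omega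
    have hm : S α ℓ b ≤ S α ℓ q := S_mono α ℓ (by omega)
    simp only [e2] at hg
    have key : ∀ h', runOp w (ℓ (patAt α (q + 1))) ⟨false, pNotEnd, .stay, .right⟩
        (pos α ℓ (q, b)) = some h' ↔ S α ℓ (q + 1) ≤ w.length ∧ h' = pos α ℓ (q + 1, b) := by
      intro h'
      simp only [pos, e1, e2, e3, e4, runOp, Bool.false_eq_true, if_false]
      rw [iter_hiRight w _ _ _ (by omega) (by omega) (by omega), S_succ α ℓ hq]
      have e5 : S α ℓ q + 1 + ℓ (patAt α (q + 1)) = S α ℓ q + ℓ (patAt α (q + 1)) + 1 := by omega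
      rw [e5, Nat.add_le_add_iff_right]
    refine ⟨fun h' e => ?_, fun hS _ => ?_⟩
    · obtain ⟨h1, h2⟩ := (key h').1 e
      exact ⟨h2, by simpa only [e4] using h1, by simp⟩
    · exact (key _).2 ⟨hS ▸ S_le α ℓ _, rfl⟩

/-- moving one virtual head over a variable to the left -/
theorem mvL {A : Type} (α : List ℕ) (q b : ℕ) (hq : q < α.length) :
    ∃ o : Op A, ∀ (w : List A) (ℓ : ℕ → ℕ),
      Sp w α ℓ (runOp w (ℓ (patAt α (q + 1))) o) (q + 1, b) (q, b) [] := by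
  by_cases hb : q + 1 ≤ b
  · refine ⟨⟨false, fun _ _ => true, .left, .stay⟩, fun w ℓ hg => ?_⟩
    have e1 : min q b = q := by omega
    have e2 : max q b = b := by omega
    have e3 : min (q + 1) b = q + 1 := by omega
    have e4 : max (q + 1) b = b := by omega
    have hm : S α ℓ (q + 1) ≤ S α ℓ b := S_mono α ℓ hb
    simp only [e4] at hg
    have key : runOp w (ℓ (patAt α (q + 1))) ⟨false, fun _ _ => true, .left, .stay⟩
        (pos α ℓ (q + 1, b)) = some (pos α ℓ (q, b)) := by
      simp only [pos, e1, e2, e3, e4, runOp]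
      rw [S_succ α ℓ hq] at hm
      simp only [Bool.false_eq_true, if_false]
      rw [S_succ α ℓ hq, show S α ℓ q + ℓ (patAt α (q + 1)) + 1 =
        S α ℓ q + 1 + ℓ (patAt α (q + 1)) by omega]
      exact iter_loLeft w _ _ _ (by omega) (by omega)
    refine ⟨fun h' e => ⟨?_, by simpa only [e2] using hg, by simp⟩, fun _ _ => key⟩
    rw [key] at e; exact (Option.some.inj e).symm
  · refine ⟨⟨false, fun _ _ => true, .stay, .left⟩, fun w ℓ hg => ?_⟩
    have e1 : min q b = b := by omega
    have e2 : max q b = q := by omega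
    have e3 : min (q + 1) b = b := by omega
    have e4 : max (q + 1) b = q + 1 := by omega
    have hm : S α ℓ b ≤ S α ℓ q := S_mono α ℓ (by omega)
    simp only [e4] at hg
    rw [S_succ α ℓ hq] at hg
    have key : runOp w (ℓ (patAt α (q + 1))) ⟨false, fun _ _ => true, .stay, .left⟩
        (pos α ℓ (q + 1, b)) = some (pos α ℓ (q, b)) := by
      simp only [pos, e1, e2, e3, e4, runOp]
      simp only [Bool.false_eq_true, if_false]
      rw [S_succ α ℓ hq, show S α ℓ q + ℓ (patAt α (q + 1)) + 1 =
        S α ℓ q + 1 + ℓ (patAt α (q + 1)) by omega]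
      exact iter_hiLeft w _ _ _ (by omega) (by omega)
    refine ⟨fun h' e => ⟨?_, ?_, by simp⟩, fun _ _ => key⟩
    · rw [key] at e; exact (Option.some.inj e).symm
    · simp only [e2]; omega

theorem matchSp {A : Type} (α : List ℕ) (l r : ℕ) (hlr : l < r) (hr : r < α.length)
    (hv : patAt α (l + 1) = patAt α (r + 1)) :
    ∃ os : List (Op A), ∀ (w : List A) (ℓ : ℕ → ℕ),
      Sp w α ℓ (runOps w (ℓ (patAt α (l + 1))) os) (l, r) (l + 1, r + 1) [(l + 1, r + 1)] := by
  refine ⟨⟨false, pEq, .right, .right⟩ ::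
    (if r + 1 = α.length then [⟨true, pEnd, .stay, .stay⟩] else []), fun w ℓ hg => ?_⟩
  have e1 : min l r = l := by omega
  have e2 : max l r = r := by omega
  have e3 : min (l + 1) (r + 1) = l + 1 := by omega
  have e4 : max (l + 1) (r + 1) = r + 1 := by omega
  have hm : S α ℓ l ≤ S α ℓ r := S_mono α ℓ (by omega)
  simp only [e2] at hg
  have k1 : ∀ h', runOp w (ℓ (patAt α (l + 1))) ⟨false, pEq, .right, .right⟩
      (pos α ℓ (l, r)) = some h' ↔
      (S α ℓ (r + 1) ≤ w.length ∧ ∀ t < ℓ (patAt α (r + 1)),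
        w[S α ℓ l + t]? = w[S α ℓ r + t]?) ∧ h' = pos α ℓ (l + 1, r + 1) := by
    intro h'
    simp only [pos, e1, e2, e3, e4, runOp, Bool.false_eq_true, if_false]
    rw [iter_match w _ _ _ hm hg, S_succ α ℓ hr, S_succ α ℓ (by omega : l < α.length), hv]
    rw [show S α ℓ l + 1 + ℓ (patAt α (r + 1)) = S α ℓ l + ℓ (patAt α (r + 1)) + 1 by omega,
      show S α ℓ r + 1 + ℓ (patAt α (r + 1)) = S α ℓ r + ℓ (patAt α (r + 1)) + 1 by omega]
  have key : ∀ h', runOps w (ℓ (patAt α (l + 1))) (⟨false, pEq, .right, .right⟩ ::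
      (if r + 1 = α.length then [⟨true, pEnd, .stay, .stay⟩] else []))
      (pos α ℓ (l, r)) = some h' ↔ Kok w α ℓ (l + 1, r + 1) ∧ h' = pos α ℓ (l + 1, r + 1) := by
    intro h'
    simp only [runOps, Option.bind_eq_some_iff, k1, Kok, Nat.add_sub_cancel]
    have k2 : ∀ h1, S α ℓ (r + 1) ≤ w.length → (runOps w (ℓ (patAt α (l + 1)))
        (if r + 1 = α.length then [⟨true, pEnd, .stay, .stay⟩] else [])
        (pos α ℓ (l + 1, r + 1)) = some h1 ↔
        ((r + 1 = α.length → S α ℓ α.length = w.length) ∧ h1 = pos α ℓ (l + 1, r + 1))) := by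
      intro h1 hle
      by_cases he : r + 1 = α.length
      · rw [if_pos he]
        simp only [runOps, runOp, if_true, pos, e3, e4, Option.bind_fun_some]
        rw [step_end w _ _ (by omega) (by omega), Nat.add_right_cancel_iff, he]
        simp
      · rw [if_neg he]
        simp [runOps, he, eq_comm]
    constructor
    · rintro ⟨a, ⟨⟨h1, h2⟩, rfl⟩, h3⟩
      obtain ⟨h4, h5⟩ := (k2 _ h1).1 h3
      exact ⟨⟨h1, h2, h4⟩, h5⟩
    · rintro ⟨⟨h1, h2, h4⟩, h5⟩
      exact ⟨_, ⟨⟨h1, h2⟩, rfl⟩, (k2 _ h1).2 ⟨h4, h5⟩⟩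
  refine ⟨fun h' e => ?_, fun hS hK => ?_⟩
  · obtain ⟨h1, h2⟩ := (key h').1 e
    exact ⟨h2, by simpa only [e4] using h1.1, by simpa using h1⟩
  · exact (key _).2 ⟨hK _ (by simp), rfl⟩

end Janus

/-! ## Part 4: from operating modes to blocks -/

namespace Janus

/-- one virtual head walks from gap `a` to gap `a'` over the listed positions -/
def Walk (m : ℕ) : ℕ → List ℕ → ℕ → Prop
  | a, [], a' => a = a'
  | a, p :: L, a' => ∃ q, q < m ∧ p = q + 1 ∧
      ((a = q ∧ Walk m (q + 1) L a') ∨ (a = q + 1 ∧ Walk m q L a'))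

theorem walk_up (m a d : ℕ) (h : a + d ≤ m) :
    Walk m a ((List.range d).map (fun i => a + 1 + i)) (a + d) := by
  induction d generalizing a with
  | zero => simp [Walk]
  | succ d ih =>
    rw [List.range_succ_eq_map, List.map_cons, List.map_map]
    refine ⟨a, by omega, rfl, Or.inl ⟨rfl, ?_⟩⟩
    have := ih (a + 1) (by omega)
    rw [show a + (d + 1) = a + 1 + d by omega]
    convert this using 2
    funext i
    simp only [Function.comp]; omega

theorem walk_down (m a d : ℕ) (h : a + d ≤ m) :
    Walk m (a + d) ((List.range d).map (fun i => a + d - i)) a := by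
  induction d with
  | zero => simp [Walk]
  | succ d ih =>
    rw [List.range_succ_eq_map, List.map_cons, List.map_map]
    refine ⟨a + d, by omega, by omega, Or.inr ⟨by omega, ?_⟩⟩
    have := ih (by omega)
    convert this using 2
    funext i
    simp only [Function.comp]; omega

theorem walk_g (m j q : ℕ) (hj : j ≤ m) (hq : q < m) :
    Walk m j (gfun j (q + 1)) q ∨ Walk m j (gfun j (q + 1)) (q + 1) := by
  unfold gfun
  split
  · left
    have := walk_up m j (q + 1 - j - 1) (by omega)
    rwa [show j + (q + 1 - j - 1) = q by omega] at this
  · split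
    · left
      have := walk_down m q (j - (q + 1) + 1) (by omega)
      rwa [show q + (j - (q + 1) + 1) = j by omega] at this
    · right
      simp only [Walk]; omega

theorem Sp_block {A : Type} {w : List A} {α : List ℕ} {ℓ : ℕ → ℕ} {x : ℕ} {o : Op A}
    {B : Blocks A} {g g1 g2 : ℕ × ℕ} {K : List (ℕ × ℕ)}
    (h1 : Sp w α ℓ (runOp w (ℓ x) o) g g1 []) (h2 : Sp w α ℓ (runB w ℓ B) g1 g2 K) :
    Sp w α ℓ (runB w ℓ ((x, [o]) :: B)) g g2 K := by
  have := Sp_comp h1 h2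
  have e : (fun h => (runOp w (ℓ x) o h).bind (runB w ℓ B)) = runB w ℓ ((x, [o]) :: B) := by
    funext h
    simp [runB, runOps]
  rw [e] at this
  exact this

theorem runB_append {A : Type} (w : List A) (ℓ : ℕ → ℕ) (B1 B2 : Blocks A) (h : ℕ × ℕ) :
    runB w ℓ (B1 ++ B2) h = (runB w ℓ B1 h).bind (runB w ℓ B2) := by
  induction B1 generalizing h with
  | nil => rfl
  | cons b B ih =>
    simp only [List.cons_append, runB, Option.bind_assoc]
    congr 1
    funext h'
    exact ih h'

theorem Sp_append {A : Type} {w : List A} {α : List ℕ} {ℓ : ℕ → ℕ}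
    {B1 B2 : Blocks A} {g g1 g2 : ℕ × ℕ} {K1 K2 : List (ℕ × ℕ)}
    (h1 : Sp w α ℓ (runB w ℓ B1) g g1 K1) (h2 : Sp w α ℓ (runB w ℓ B2) g1 g2 K2) :
    Sp w α ℓ (runB w ℓ (B1 ++ B2)) g g2 (K1 ++ K2) := by
  have := Sp_comp h1 h2
  have e : (fun h => (runB w ℓ B1 h).bind (runB w ℓ B2)) = runB w ℓ (B1 ++ B2) := by
    funext h; exact (runB_append w ℓ B1 B2 h).symm
  rw [e] at this
  exact this

theorem exists_inter {A : Type} (α : List ℕ) (D : List (ℕ × Marker)) (a b a' b' : ℕ)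
    (hl : Walk α.length a ((D.filter (fun e => decide (e.2 = Marker.lam))).map Prod.fst) a')
    (hr : Walk α.length b ((D.filter (fun e => decide (e.2 = Marker.rho))).map Prod.fst) b') :
    ∃ B : Blocks A, B.map Prod.fst = D.map (fun e => patAt α e.1) ∧
      ∀ (w : List A) (ℓ : ℕ → ℕ), Sp w α ℓ (runB w ℓ B) (a, b) (a', b') [] := by
  induction D generalizing a b with
  | nil =>
    simp only [List.filter_nil, List.map_nil, Walk] at hl hr
    subst hl hr
    exact ⟨[], rfl, fun w ℓ => Sp_id _⟩
  | cons e D ih =>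
    obtain ⟨p, mk⟩ := e
    cases mk with
    | lam =>
      simp only [List.filter_cons, decide_true, if_true, List.map_cons, Walk, reduceCtorEq,
        decide_false, Bool.false_eq_true, if_false] at hl hr
      obtain ⟨q, hq, rfl, ⟨rfl, h⟩ | ⟨rfl, h⟩⟩ := hl
      · obtain ⟨B, hB, hS⟩ := ih _ _ h hr
        obtain ⟨o, ho⟩ := mvR (A := A) α a b hq
        exact ⟨(patAt α (a + 1), [o]) :: B, by simp [hB], fun w ℓ => Sp_block (ho w ℓ) (hS w ℓ)⟩
      · obtain ⟨B, hB, hS⟩ := ih _ _ h hr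
        obtain ⟨o, ho⟩ := mvL (A := A) α q b hq
        exact ⟨(patAt α (q + 1), [o]) :: B, by simp [hB], fun w ℓ => Sp_block (ho w ℓ) (hS w ℓ)⟩
    | rho =>
      simp only [List.filter_cons, decide_true, if_true, List.map_cons, Walk, reduceCtorEq,
        decide_false, Bool.false_eq_true, if_false] at hl hr
      obtain ⟨q, hq, rfl, ⟨rfl, h⟩ | ⟨rfl, h⟩⟩ := hr
      · obtain ⟨B, hB, hS⟩ := ih _ _ hl h
        obtain ⟨o, ho⟩ := mvR (A := A) α b a hq
        exact ⟨(patAt α (b + 1), [o]) :: B, by simp [hB],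
          fun w ℓ => Sp_block (Sp_swap (ho w ℓ)) (hS w ℓ)⟩
      · obtain ⟨B, hB, hS⟩ := ih _ _ hl h
        obtain ⟨o, ho⟩ := mvL (A := A) α q a hq
        exact ⟨(patAt α (q + 1), [o]) :: B, by simp [hB],
          fun w ℓ => Sp_block (Sp_swap (ho w ℓ)) (hS w ℓ)⟩

/-- stepping back over the variable to be matched, if necessary -/
theorem stepBack {A : Type} (α : List ℕ) (q a b : ℕ) (hq : q < α.length)
    (ha : a = q ∨ a = q + 1) :
    ∃ os : List (Op A), ∀ (w : List A) (ℓ : ℕ → ℕ),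
      Sp w α ℓ (runOps w (ℓ (patAt α (q + 1))) os) (a, b) (q, b) [] := by
  rcases ha with rfl | rfl
  · exact ⟨[], fun w ℓ => Sp_id _⟩
  · obtain ⟨o, ho⟩ := mvL (A := A) α q b hq
    refine ⟨[o], fun w ℓ => ?_⟩
    have e : runOps w (ℓ (patAt α (q + 1))) [o] = runOp w (ℓ (patAt α (q + 1))) o := by
      funext h; simp [runOps]
    rw [e]; exact ho w ℓ

theorem runOps_append {A : Type} (w : List A) (v : ℕ) (B1 B2 : List (Op A)) (h : ℕ × ℕ) :
    runOps w v (B1 ++ B2) h = (runOps w v B1 h).bind (runOps w v B2) := by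
  induction B1 generalizing h with
  | nil => rfl
  | cons b B ih =>
    simp only [List.cons_append, runOps, Option.bind_assoc]
    congr 1
    funext h'
    exact ih h'

theorem exists_round {A : Type} (α : List ℕ) (D : List (ℕ × Marker)) (a b l r : ℕ)
    (ha : a ≤ α.length) (hb : b ≤ α.length) (hl : 1 ≤ l) (hlr : l < r) (hr : r ≤ α.length)
    (hv : patAt α l = patAt α r)
    (h1 : D.filter (fun e => decide (e.2 = Marker.lam)) =
      (gfun a l).map (fun p => (p, Marker.lam)))
    (h2 : D.filter (fun e => decide (e.2 = Marker.rho)) =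
      (gfun b r).map (fun p => (p, Marker.rho))) :
    ∃ B : Blocks A, B.map Prod.fst =
        (D ++ [(r, Marker.rho), (l, Marker.lam)]).map (fun e => patAt α e.1) ∧
      ∀ (w : List A) (ℓ : ℕ → ℕ), Sp w α ℓ (runB w ℓ B) (a, b) (l, r) [(l, r)] := by
  obtain ⟨l, rfl⟩ : ∃ l', l = l' + 1 := ⟨l - 1, by omega⟩
  obtain ⟨r, rfl⟩ : ∃ r', r = r' + 1 := ⟨r - 1, by omega⟩
  have hw1 : ∃ a', (a' = l ∨ a' = l + 1) ∧
      Walk α.length a ((D.filter (fun e => decide (e.2 = Marker.lam))).map Prod.fst) a' := by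
    rw [h1, List.map_map]
    have : (Prod.fst ∘ fun p : ℕ => (p, Marker.lam)) = id := rfl
    rw [this, List.map_id]
    rcases walk_g α.length a l ha (by omega) with h | h
    · exact ⟨l, Or.inl rfl, h⟩
    · exact ⟨l + 1, Or.inr rfl, h⟩
  have hw2 : ∃ b', (b' = r ∨ b' = r + 1) ∧
      Walk α.length b ((D.filter (fun e => decide (e.2 = Marker.rho))).map Prod.fst) b' := by
    rw [h2, List.map_map]
    have : (Prod.fst ∘ fun p : ℕ => (p, Marker.rho)) = id := rfl
    rw [this, List.map_id]
    rcases walk_g α.length b r hb (by omega) with h | h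
    · exact ⟨r, Or.inl rfl, h⟩
    · exact ⟨r + 1, Or.inr rfl, h⟩
  obtain ⟨a', ha', hwa⟩ := hw1
  obtain ⟨b', hb', hwb⟩ := hw2
  obtain ⟨B, hB, hS⟩ := exists_inter (A := A) α D a b a' b' hwa hwb
  obtain ⟨o1, ho1⟩ := stepBack (A := A) α r b' a' (by omega) hb'
  obtain ⟨o2, ho2⟩ := stepBack (A := A) α l a' r (by omega) ha'
  obtain ⟨o3, ho3⟩ := matchSp (A := A) α l r (by omega) (by omega) hv
  refine ⟨B ++ [(patAt α (r + 1), o1), (patAt α (l + 1), o2 ++ o3)], by simp [hB], fun w ℓ => ?_⟩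
  have t := Sp_comp (Sp_swap (ho1 w ℓ)) (Sp_comp (ho2 w ℓ) (ho3 w ℓ))
  have e : (fun h => (runOps w (ℓ (patAt α (r + 1))) o1 h).bind
      (fun h => (runOps w (ℓ (patAt α (l + 1))) o2 h).bind
        (runOps w (ℓ (patAt α (l + 1))) o3))) =
      runB w ℓ [(patAt α (r + 1), o1), (patAt α (l + 1), o2 ++ o3)] := by
    funext h
    simp only [runB, Option.bind_fun_some]
    congr 1
    funext h'
    rw [runOps_append]
  rw [e] at t
  have := Sp_append (hS w ℓ) t
  simpa using this

theorem exists_blocks {A : Type} (α : List ℕ) (Δ : List (List (ℕ × Marker))) (C : List (ℕ × ℕ))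
    (hlen : Δ.length = C.length)
    (hC : ∀ p ∈ C, 1 ≤ p.1 ∧ p.1 < p.2 ∧ p.2 ≤ α.length ∧ patAt α p.1 = patAt α p.2)
    (hD : ∀ i < C.length,
      ∃ D' : List (ℕ × Marker),
        D'.filter (fun e => decide (e.2 = Marker.lam)) =
          (gfun (if i = 0 then 0 else (C.getD (i - 1) (0, 0)).1) (C.getD i (0, 0)).1).map
            (fun p => (p, Marker.lam)) ∧
        D'.filter (fun e => decide (e.2 = Marker.rho)) =
          (gfun (if i = 0 then 0 else (C.getD (i - 1) (0, 0)).2) (C.getD i (0, 0)).2).map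
            (fun p => (p, Marker.rho)) ∧
        GoodInterleaving D' ∧
        Δ.getD i [] =
          D' ++ [((C.getD i (0, 0)).2, Marker.rho), ((C.getD i (0, 0)).1, Marker.lam)]) :
    ∃ (B : Blocks A) (g : ℕ × ℕ), B.map Prod.fst = hmiVars α Δ ∧
      ∀ (w : List A) (ℓ : ℕ → ℕ), Sp w α ℓ (runB w ℓ B) (0, 0) g C := by
  have main : ∀ i ≤ C.length, ∃ B : Blocks A, B.map Prod.fst = hmiVars α (Δ.take i) ∧
      ∀ (w : List A) (ℓ : ℕ → ℕ), Sp w α ℓ (runB w ℓ B) (0, 0)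
        (if i = 0 then 0 else (C.getD (i - 1) (0, 0)).1,
          if i = 0 then 0 else (C.getD (i - 1) (0, 0)).2) (C.take i) := by
    intro i
    induction i with
    | zero =>
      intro _
      refine ⟨[], by simp [hmiVars, hmi], fun w ℓ => ?_⟩
      exact Sp_id (w := w) (α := α) (ℓ := ℓ) (0, 0)
    | succ i ih =>
      intro hi
      obtain ⟨B, hB, hS⟩ := ih (by omega)
      obtain ⟨D', e1, e2, -, e3⟩ := hD i (by omega)
      have hCi : C.getD i (0, 0) = C[i] := List.getD_eq_getElem _ _ (by omega)
      have hmem := hC C[i] (List.getElem_mem _)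
      have hprev : (if i = 0 then 0 else (C.getD (i - 1) (0, 0)).1) ≤ α.length ∧
          (if i = 0 then 0 else (C.getD (i - 1) (0, 0)).2) ≤ α.length := by
        by_cases h0 : i = 0
        · simp [h0]
        · rw [if_neg h0, if_neg h0, List.getD_eq_getElem _ _ (by omega : i - 1 < C.length)]
          have := hC C[i - 1] (List.getElem_mem _)
          omega
      rw [hCi] at e1 e2 e3
      obtain ⟨B', hB', hS'⟩ := exists_round (A := A) α D' _ _ _ _ hprev.1 hprev.2 hmem.1 hmem.2.1
        hmem.2.2.1 hmem.2.2.2 e1 e2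
      refine ⟨B ++ B', ?_, fun w ℓ => ?_⟩
      · have hiΔ : i < Δ.length := by omega
        rw [List.take_succ_eq_append_getElem hiΔ, List.map_append, hB, hB', ← e3,
          List.getD_eq_getElem _ _ hiΔ]
        simp only [hmiVars, hmi, List.flatten_append, List.map_append, List.flatten_cons,
          List.flatten_nil, List.append_nil]
      · have := Sp_append (hS w ℓ) (hS' w ℓ)
        rw [List.take_succ_eq_append_getElem (by omega)]
        simp only [Nat.add_sub_cancel, hCi, Nat.succ_ne_zero, if_false]
        exact this
  obtain ⟨B, hB, hS⟩ := main C.length le_rfl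
  refine ⟨B, (if C.length = 0 then 0 else (C.getD (C.length - 1) (0, 0)).1,
    if C.length = 0 then 0 else (C.getD (C.length - 1) (0, 0)).2), ?_, fun w ℓ => ?_⟩
  · rw [hB, ← hlen, List.take_length]
  · have := hS w ℓ
    rwa [List.take_length] at this

end Janus

/-! ## Part 5: languages -/

namespace Janus

theorem patAt_eq (α : List ℕ) (j : ℕ) (h : j < α.length) : patAt α (j + 1) = α[j] := by
  simp [patAt, h]

theorem mem_varpos {α : List ℕ} {x j : ℕ} :
    j ∈ varpos α x ↔ 1 ≤ j ∧ j ≤ α.length ∧ patAt α j = x := by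
  simp [varpos, and_assoc]

theorem card_varpos (α : List ℕ) (x : ℕ) : (varpos α x).card = α.count x := by
  have h : varpos α x = ((Finset.range α.length).filter (fun i => α.getD i 0 = x)).map
      ⟨fun i => i + 1, add_left_injective 1⟩ := by
    ext j
    simp only [mem_varpos, Finset.mem_map, Finset.mem_filter, Finset.mem_range,
      Function.Embedding.coeFn_mk]
    constructor
    · rintro ⟨h1, h2, h3⟩
      exact ⟨j - 1, ⟨by omega, h3⟩, by omega⟩
    · rintro ⟨i, ⟨h1, h2⟩, rfl⟩
      exact ⟨by omega, by omega, h2⟩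
  rw [h, Finset.card_map]
  clear h
  induction α with
  | nil => simp
  | cons a α ih =>
    rw [List.length_cons, Finset.range_eq_Ico, ← Finset.insert_Ico_add_one_left_eq_Ico (by omega),
      Finset.filter_insert]
    have e : (Finset.Ico (0 + 1) (α.length + 1)).filter (fun i => (a :: α).getD i 0 = x) =
      ((Finset.range α.length).filter (fun i => α.getD i 0 = x)).map
        ⟨fun i => i + 1, add_left_injective 1⟩ := by
      ext j
      simp only [Finset.mem_map, Finset.mem_filter, Finset.mem_range, Finset.mem_Ico,
        Function.Embedding.coeFn_mk]
      constructor
      · rintro ⟨⟨h1, h2⟩, h3⟩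
        obtain ⟨i, rfl⟩ : ∃ i, j = i + 1 := ⟨j - 1, by omega⟩
        exact ⟨i, ⟨by omega, by simpa using h3⟩, rfl⟩
      · rintro ⟨i, ⟨h1, h2⟩, rfl⟩
        exact ⟨⟨by omega, by omega⟩, by simpa using h2⟩
    rw [List.count_cons, e]
    by_cases hx : a = x
    · subst hx
      simp only [List.getD_cons_zero, if_true, beq_self_eq_true]
      rw [Finset.card_insert_of_notMem (by simp), Finset.card_map, ih]
    · simp only [List.getD_cons_zero, hx, if_false, beq_iff_eq, add_zero]
      rw [Finset.card_map, ih]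

theorem order_card {α : List ℕ} {x : ℕ} {M : List (ℕ × ℕ)} (hx : x ∈ α)
    (h : IsMatchingOrder α x M) : α.count x ≤ M.toFinset.card + 1 := by
  classical
  obtain ⟨-, h2, h3⟩ := h
  let G : SimpleGraph (varpos α x) := SimpleGraph.fromRel (fun u v => (u.1, v.1) ∈ M)
  have hcard := card_varpos α x
  have hpos : 0 < (varpos α x).card := by rw [hcard]; exact List.count_pos_iff.2 hx
  have : Nonempty (varpos α x) := by
    obtain ⟨y, hy⟩ := Finset.card_pos.1 hpos
    exact ⟨⟨y, hy⟩⟩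
  have hconn : G.Connected := by
    refine ⟨fun a b => ?_⟩
    have hab := h3 a.1 a.2 b.1 b.2
    have key : ∀ c, Relation.ReflTransGen (fun u v => (u, v) ∈ M ∨ (v, u) ∈ M) a.1 c →
        ∀ hc : c ∈ varpos α x, G.Reachable a ⟨c, hc⟩ := by
      intro c hc
      induction hc with
      | refl => intro _; exact SimpleGraph.Reachable.refl _
      | @tail u v hu hv ih =>
        intro hvv
        have huu : u ∈ varpos α x := by
          rcases hv with hv | hv
          · exact (h2 _ hv).1
          · exact (h2 _ hv).2.1
        refine (ih huu).trans (SimpleGraph.Adj.reachable ?_)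
        refine ⟨?_, hv⟩
        intro he
        have : u = v := congrArg Subtype.val he
        rcases hv with hv | hv
        · have := (h2 _ hv).2.2; simp_all
        · have := (h2 _ hv).2.2; simp_all
    exact key b.1 hab b.2
  have h1 := hconn.card_vert_le_card_edgeSet_add_one
  have h4 : Nat.card G.edgeSet ≤ M.toFinset.card := by
    let f : G.edgeSet → M.toFinset := fun e => 
      ⟨((e.1.map Subtype.val).inf, (e.1.map Subtype.val).sup), by
        obtain ⟨e, he⟩ := e
        induction e using Sym2.ind with
        | _ a b =>
          have he' : G.Adj a b := he
          simp only [Sym2.map_mk, Sym2.inf_mk, Sym2.sup_mk, List.mem_toFinset]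
          rcases he'.2 with h | h
          · have := (h2 _ h).2.2
            simp only at this
            rw [min_eq_left this.le, max_eq_right this.le]; exact h
          · have := (h2 _ h).2.2
            simp only at this
            rw [min_eq_right this.le, max_eq_left this.le]; exact h⟩
    have hf : Function.Injective f := by
      rintro ⟨e, he⟩ ⟨e', he'⟩ hee
      simp only [f, Subtype.mk.injEq, Prod.mk.injEq] at hee
      rw [Subtype.mk.injEq]
      apply Sym2.map.injective Subtype.val_injective
      exact Sym2.inf_eq_inf_and_sup_eq_sup.1 hee
    have := Nat.card_le_card_of_injective f hf
    rwa [Nat.card_eq_fintype_card (α := M.toFinset), Fintype.card_coe] at this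
  rw [Nat.card_eq_fintype_card, Fintype.card_coe, hcard] at h1
  omega

theorem cmo_mem {α : List ℕ} {C : List (ℕ × ℕ)} {M : ℕ → List (ℕ × ℕ)}
    (h1 : ∀ x ∈ α.toFinset, IsMatchingOrder α x (M x))
    (h2 : C.length = ∑ x ∈ α.toFinset, (α.count x - 1))
    (h3 : ∀ x ∈ α.toFinset, ∀ p ∈ M x, p ∈ C) :
    ∀ p ∈ C, ∃ x ∈ α.toFinset, p ∈ M x := by
  have hsub : α.toFinset.biUnion (fun x => (M x).toFinset) ⊆ C.toFinset := by
    intro p hp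
    simp only [Finset.mem_biUnion] at hp
    obtain ⟨x, hx, hp⟩ := hp
    exact List.mem_toFinset.2 (h3 x hx p (List.mem_toFinset.1 hp))
  have hcard : (α.toFinset.biUnion (fun x => (M x).toFinset)).card =
      ∑ x ∈ α.toFinset, (M x).toFinset.card := by
    apply Finset.card_biUnion
    intro x hx y hy hxy
    rw [Function.onFun_apply, Finset.disjoint_left] 
    intro p hp hq
    have a := ((h1 x hx).2.1 p (List.mem_toFinset.1 hp)).1
    have b := ((h1 y hy).2.1 p (List.mem_toFinset.1 hq)).1
    rw [mem_varpos] at a b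
    exact hxy (a.2.2.symm.trans b.2.2)
  have hle : ∑ x ∈ α.toFinset, (α.count x - 1) ≤ ∑ x ∈ α.toFinset, (M x).toFinset.card := by
    apply Finset.sum_le_sum
    intro x hx
    have := order_card (List.mem_toFinset.1 hx) (h1 x hx)
    omega
  have hC := C.toFinset_card_le
  have heq := Finset.eq_of_subset_of_card_le hsub (by omega)
  intro p hp
  have : p ∈ C.toFinset := List.mem_toFinset.2 hp
  rw [← heq] at this
  simp only [Finset.mem_biUnion] at this
  obtain ⟨x, hx, hp⟩ := this
  exact ⟨x, hx, List.mem_toFinset.1 hp⟩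

end Janus

/-! ## Part 6: correctness of the accepted language -/

namespace Janus

/-- the edge relation of a matching order -/
def Edge (C : List (ℕ × ℕ)) (u v : ℕ) : Prop := (u, v) ∈ C ∨ (v, u) ∈ C

/-- the properties of the list of matching positions used below -/
structure GoodC (α : List ℕ) (C : List (ℕ × ℕ)) : Prop where
  ok : ∀ p ∈ C, 1 ≤ p.1 ∧ p.1 < p.2 ∧ p.2 ≤ α.length ∧ patAt α p.1 = patAt α p.2
  conn : ∀ a b, 1 ≤ a → a ≤ α.length → 1 ≤ b → b ≤ α.length → patAt α a = patAt α b →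
    Relation.ReflTransGen (Edge C) a b

theorem goodC_of {α : List ℕ} {C : List (ℕ × ℕ)} (h : IsCompleteMatchingOrder α C) :
    GoodC α C := by
  obtain ⟨M, h1, h2, h3⟩ := h
  constructor
  · intro p hp
    obtain ⟨x, hx, hpx⟩ := cmo_mem h1 h2 h3 p hp
    obtain ⟨a, b, c⟩ := (h1 x hx).2.1 p hpx
    rw [mem_varpos] at a b
    exact ⟨a.1, c, b.2.1, a.2.2.trans b.2.2.symm⟩
  · intro a b ha ha' hb hb' hab
    have hx : patAt α a ∈ α.toFinset := by
      obtain ⟨a, rfl⟩ : ∃ a', a = a' + 1 := ⟨a - 1, by omega⟩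
      rw [patAt_eq α a (by omega)]
      exact List.mem_toFinset.2 (List.getElem_mem _)
    refine Relation.ReflTransGen.mono (r := fun u v => (u, v) ∈ M (patAt α a) ∨ (v, u) ∈ M (patAt α a)) ?_ _ _
      ((h1 _ hx).2.2 a (mem_varpos.2 ⟨ha, ha', rfl⟩) b (mem_varpos.2 ⟨hb, hb', hab.symm⟩))
    intro u v huv
    exact huv.imp (h3 _ hx _) (h3 _ hx _)

theorem S_eq_length {A : Type} (α : List ℕ) (σ : ℕ → List A) (j : ℕ) :
    S α (fun x => if x ∈ α then (σ x).length else 0) j = ((α.take j).map σ).flatten.length := by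
  unfold S
  rw [List.length_flatten, List.map_map]
  congr 1
  apply List.map_congr_left
  intro x hx
  simp [List.mem_of_mem_take hx]

theorem factor_eq {A : Type} (α : List ℕ) (σ : ℕ → List A) (j : ℕ) (hj : j < α.length) (t : ℕ)
    (ht : t < (σ α[j]).length) :
    (α.map σ).flatten[((α.take j).map σ).flatten.length + t]? = (σ α[j])[t]? := by
  have e : (α.map σ).flatten =
      ((α.take j).map σ).flatten ++ (σ α[j] ++ ((α.drop (j + 1)).map σ).flatten) := by
    conv_lhs => rw [← List.take_append_drop j α, List.drop_eq_getElem_cons hj]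
    simp only [List.map_append, List.map_cons, List.flatten_append, List.flatten_cons]
  rw [e, List.getElem?_append_right (by omega), Nat.add_sub_cancel_left,
    List.getElem?_append_left ht]

theorem complete {A : Type} (α : List ℕ) (C : List (ℕ × ℕ)) (hC : GoodC α C) (σ : ℕ → List A) :
    ∃ ℓ : ℕ → ℕ, (∀ x, ℓ x ≤ (α.map σ).flatten.length) ∧
      S α ℓ α.length = (α.map σ).flatten.length ∧
      ∀ k ∈ C, Kok (α.map σ).flatten α ℓ k := by
  have hS := S_eq_length α σ
  set ℓ : ℕ → ℕ := fun x => if x ∈ α then (σ x).length else 0 with hℓ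
  have hm : S α ℓ α.length = (α.map σ).flatten.length := by rw [hS, List.take_length]
  have hin : ∀ x ∈ α, ℓ x = (σ x).length := fun x hx => by simp [hℓ, hx]
  refine ⟨ℓ, ?_, hm, ?_⟩
  · intro x
    by_cases hx : x ∈ α
    · obtain ⟨i, hi, rfl⟩ := List.mem_iff_getElem.1 hx
      have := S_succ α ℓ hi
      rw [patAt_eq α i hi] at this
      have h2 := S_le α ℓ (i + 1)
      omega
    · simp [hℓ, hx]
  · rintro ⟨a, b⟩ hk
    obtain ⟨h1, h2, h3, h4⟩ := hC.ok _ hk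
    simp only at h1 h2 h3 h4
    obtain ⟨a, rfl⟩ : ∃ a', a = a' + 1 := ⟨a - 1, by omega⟩
    obtain ⟨b, rfl⟩ : ∃ b', b = b' + 1 := ⟨b - 1, by omega⟩
    refine ⟨hm ▸ S_le α ℓ _, ?_, fun _ => hm⟩
    intro t ht
    simp only [Nat.add_sub_cancel] at ht ⊢
    rw [patAt_eq α a (by omega), patAt_eq α b (by omega)] at h4
    rw [patAt_eq α b (by omega), hin _ (List.getElem_mem _)] at ht
    rw [hS, hS, factor_eq α σ b (by omega) t ht, factor_eq α σ a (by omega) t (by rwa [h4]), h4]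

theorem sound_full {A : Type} (w : List A) (α : List ℕ) (C : List (ℕ × ℕ)) (hC : GoodC α C)
    (ℓ : ℕ → ℕ) (hn : S α ℓ α.length = w.length) (hK : ∀ k ∈ C, Kok w α ℓ k) :
    w ∈ PatternLang A α := by
  have hpath : ∀ a c, Relation.ReflTransGen (Edge C) a c → patAt α c = patAt α a ∧
      ∀ t < ℓ (patAt α a), w[S α ℓ (a - 1) + t]? = w[S α ℓ (c - 1) + t]? := by
    intro a c h
    induction h with
    | refl => exact ⟨rfl, fun _ _ => rfl⟩
    | @tail u v hu huv ih =>
      obtain ⟨i1, i2⟩ := ih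
      rcases huv with h | h
      · have e := (hC.ok _ h).2.2.2
        have k := (hK _ h).2.1
        simp only at e k
        refine ⟨e ▸ i1, fun t ht => (i2 t ht).trans (k t ?_)⟩
        rwa [← e, i1]
      · have e := (hC.ok _ h).2.2.2
        have k := (hK _ h).2.1
        simp only at e k
        refine ⟨e.trans i1, fun t ht => (i2 t ht).trans (k t ?_).symm⟩
        rwa [i1]
  let σ : ℕ → List A := fun x => (w.drop (S α ℓ (α.idxOf x))).take (ℓ x)
  have hσ : ∀ j (hj : j < α.length), (w.drop (S α ℓ j)).take (ℓ α[j]) = σ α[j] := by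
    intro j hj
    have hi : α.idxOf α[j] < α.length := List.idxOf_lt_length_iff.2 (List.getElem_mem _)
    have hp := hC.conn (j + 1) (α.idxOf α[j] + 1) (by omega) (by omega) (by omega) (by omega)
      (by rw [patAt_eq α j hj, patAt_eq α _ hi, List.getElem_idxOf])
    have := (hpath _ _ hp).2
    rw [patAt_eq α j hj] at this
    simp only [Nat.add_sub_cancel] at this
    apply List.ext_getElem?
    intro t
    simp only [σ, List.getElem?_take, List.getElem?_drop]
    split
    · exact this t (by assumption)
    · rfl
  have hind : ∀ j ≤ α.length, w.take (S α ℓ j) = ((α.take j).map σ).flatten := by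
    intro j
    induction j with
    | zero => intro _; simp [S]
    | succ j ih =>
      intro hj
      rw [S_succ α ℓ hj, patAt_eq α j hj, List.take_add, ih (by omega), hσ j hj,
        List.take_succ_eq_append_getElem hj, List.map_append, List.flatten_append]
      simp only [List.map_cons, List.map_nil, List.flatten_cons, List.flatten_nil, List.append_nil]
  refine ⟨σ, ?_⟩
  have := hind α.length le_rfl
  rwa [hn, List.take_length, List.take_length] at this

theorem sound {A : Type} (w : List A) (α : List ℕ) (hα : α ≠ []) (C : List (ℕ × ℕ))
    (hC : GoodC α C) (ℓ : ℕ → ℕ) (hK : ∀ k ∈ C, Kok w α ℓ k) :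
    w ∈ PatternLang A α := by
  have hm : 0 < α.length := List.length_pos_iff.2 hα
  obtain ⟨R, hR1, hR2⟩ : ∃ R, (∀ k ∈ C, k.2 ≤ R) ∧ (R = 0 ∨ ∃ k ∈ C, k.2 = R) := by
    clear hC hK
    induction C with
    | nil => exact ⟨0, by simp, Or.inl rfl⟩
    | cons c C ih =>
      obtain ⟨R, h1, h2⟩ := ih
      by_cases hc : R ≤ c.2
      · refine ⟨c.2, ?_, Or.inr ⟨c, by simp, rfl⟩⟩
        intro k hk
        rcases List.mem_cons.1 hk with rfl | hk
        · exact le_rfl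
        · exact (h1 k hk).trans hc
      · refine ⟨R, ?_, ?_⟩
        · intro k hk
          rcases List.mem_cons.1 hk with rfl | hk
          · omega
          · exact h1 k hk
        · rcases h2 with h2 | ⟨k, hk, h2⟩
          · omega
          · exact Or.inr ⟨k, List.mem_cons_of_mem _ hk, h2⟩
  have hSR : S α ℓ R ≤ w.length := by
    rcases hR2 with rfl | ⟨k, hk, rfl⟩
    · simp [S]
    · exact (hK k hk).1
  have hRm : R ≤ α.length := by
    rcases hR2 with rfl | ⟨k, hk, rfl⟩
    · omega
    · exact (hC.ok k hk).2.2.1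
  rcases hRm.eq_or_lt with hRm | hRm
  · rcases hR2 with h0 | ⟨k, hk, hkR⟩
    · omega
    · exact sound_full w α C hC ℓ ((hK k hk).2.2 (hkR.trans hRm)) hK
  have huniq : ∀ i j (hi : i < α.length) (hj : j < α.length), R ≤ i → i ≠ j → α[i] ≠ α[j] := by
    intro i j hi hj hRi hij he
    have hp := hC.conn (i + 1) (j + 1) (by omega) (by omega) (by omega) (by omega)
      (by rw [patAt_eq α i hi, patAt_eq α j hj, he])
    rcases Relation.ReflTransGen.cases_head hp with h | ⟨c, h, -⟩
    · omega
    · rcases h with h | h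
      · have a := (hC.ok _ h).2.1
        have b := hR1 _ h
        simp only at a b; omega
      · have b := hR1 _ h
        simp only at b; omega
  let ℓ' : ℕ → ℕ := fun y => if y ∈ α.take R then ℓ y else
    if y = α[R] then w.length - S α ℓ R else 0
  have hnot : ∀ i (hi : i < α.length), R ≤ i → α[i] ∉ α.take R := by
    intro i hi hRi hmem
    obtain ⟨j, hj, he⟩ := List.mem_iff_getElem.1 hmem
    rw [List.length_take] at hj
    rw [List.getElem_take] at he
    exact huniq i j hi (by omega) hRi (by omega) he.symm
  have hS' : ∀ j ≤ R, S α ℓ' j = S α ℓ j := by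
    intro j hj
    unfold S
    congr 1
    apply List.map_congr_left
    intro y hy
    have : y ∈ α.take R := List.take_subset_take_left α hj hy
    simp only [ℓ', this, if_true]
  have hbig : ∀ d, R + 1 + d ≤ α.length → S α ℓ' (R + 1 + d) = w.length := by
    intro d
    induction d with
    | zero =>
      intro _
      rw [Nat.add_zero, S_succ α ℓ' hRm, patAt_eq α R hRm, hS' R le_rfl]
      simp only [ℓ', hnot R hRm le_rfl, if_false, if_true]
      omega
    | succ d ih =>
      intro hd
      rw [show R + 1 + (d + 1) = (R + 1 + d) + 1 by omega, S_succ α ℓ' (by omega : R + 1 + d < α.length),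
        patAt_eq α _ (by omega), ih (by omega)]
      simp only [ℓ', hnot (R + 1 + d) (by omega) (by omega),
        huniq (R + 1 + d) R (by omega) hRm (by omega) (by omega), if_false, add_zero]
  refine sound_full w α C hC ℓ' ?_ ?_
  · have := hbig (α.length - (R + 1)) (by omega)
    rwa [show R + 1 + (α.length - (R + 1)) = α.length by omega] at this
  · rintro ⟨a, b⟩ hk
    obtain ⟨h1, h2, h3, -⟩ := hC.ok _ hk
    obtain ⟨k1, k2, k3⟩ := hK _ hk
    have hbR := hR1 _ hk
    simp only at h1 h2 h3 k1 k2 k3 hbR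
    have hl : ℓ' (patAt α b) = ℓ (patAt α b) := by
      obtain ⟨b, rfl⟩ : ∃ b', b = b' + 1 := ⟨b - 1, by omega⟩
      rw [patAt_eq α b (by omega)]
      have : α[b] ∈ α.take R := List.mem_iff_getElem.2
        ⟨b, by rw [List.length_take]; omega, by rw [List.getElem_take]⟩
      simp only [ℓ', this, if_true]
    refine ⟨?_, ?_, ?_⟩
    · simp only; rw [hS' b hbR]; exact k1
    · simp only
      rw [hl, hS' (a - 1) (by omega), hS' (b - 1) (by omega)]
      exact k2
    · simp only; intro h; omega

theorem main_result {A : Type} (α : List ℕ) (hα : α ≠ [])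
    (Δ : List (List (ℕ × Marker))) (hΔ : IsJanusOperatingMode α Δ) :
    ∃ M : JFA (cnOf α Δ + 1) A, M.Lang = PatternLang A α := by
  obtain ⟨C, hcmo, hlen, hD⟩ := hΔ
  have hC := goodC_of hcmo
  obtain ⟨B, g, hB, hS⟩ := exists_blocks (A := A) α Δ C hlen hC.ok hD
  obtain ⟨M, hM⟩ := exists_machine α Δ B hB
  refine ⟨M, ?_⟩
  ext w
  have hpos : ∀ ℓ, pos α ℓ (0, 0) = (1, 1) := by intro ℓ; simp [pos, S]
  have h0 : ∀ ℓ, S α ℓ (max ((0, 0) : ℕ × ℕ).1 ((0, 0) : ℕ × ℕ).2) ≤ w.length := by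
    intro ℓ; simp [S]
  change M.Accepts w ↔ _
  rw [hM]
  constructor
  · rintro ⟨ℓ, -, h', hr⟩
    have := (hS w ℓ (h0 ℓ)).1 h'
    rw [hpos] at this
    exact sound w α hα C hC ℓ (this hr).2.2
  · rintro ⟨σ, rfl⟩
    obtain ⟨ℓ, h1, h2, h3⟩ := complete α C hC σ
    refine ⟨ℓ, h1, pos α ℓ g, ?_⟩
    · have := (hS _ ℓ (h0 ℓ)).2 h2 h3
      rwa [hpos] at this

end Janus

/-- Theorem 1 of the paper. Let `α` be a terminal-free
pattern and let `Δ` be an arbitrary Janus operating mode for `α`. Then there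
exists a Janus automaton `M` with `cn(Δ) + 1` counters such that
`L(M) = L(α)`. -/
theorem statement12 {A : Type} [Fintype A] [Nonempty A]
    (α : List ℕ) (hα : α ≠ [])
    (Δ : List (List (ℕ × Marker))) (hΔ : IsJanusOperatingMode α Δ) :
    ∃ M : JFA (cnOf α Δ + 1) A, M.Lang = PatternLang A α := by
  exact Janus.main_result α hα Δ hΔ
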